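/- arXiv:2108.11862 — 2 statements merged into one kernel-verified Lean document; each statement's English description precedes it below -/
import Mathlib

section
/- Let F ∈ Fields_1, let p ∈ F[t] be a monic irreducible polynomial, let a ∈ Λ^3 F(p)^×, and let b_1, b_2 ∈ Λ^4 F(t)^× both be lifts of a, i.e. ∂_{ν_p}^{(4)}(b_i) = a and ∂_{ν_q}^{(4)}(b_i) = 0 for every monic irreducible q ≠ p, for i = 1,2. Then b_1 − b_2 = a_1 + δ_4(a_2), where a_1 lies in the image of the natural map Λ^4 F^× → Λ^4 F(t)^× and a_2 ∈ B_2(F(t))⊗Λ^2 F(t)^× is such that for every monic irreducible q ∈ F[t] the element ∂_{ν_q}(a_2) ∈ B_2(F(q))⊗F(q)^× lies in the ℚ-span of the elements {x}_2 ⊗ x, x ∈ F(q)∖{0,1}. -/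
open scoped TensorProduct
open ExteriorAlgebra

noncomputable section ChowPrelim

universe u

/-- The ℚ-vector space `F^× ⊗ ℚ` attached to a field `F`. -/
abbrev UnitsQ (F : Type u) [Field F] : Type u := ℚ ⊗[ℤ] (Additive Fˣ)

/-- The canonical map `F → F^× ⊗ ℚ`, sending a nonzero `x` to `x ⊗ 1` and `0` to `0`. -/
noncomputable def mkQ {F : Type u} [Field F] (x : F) : UnitsQ F :=
  letI := Classical.dec (x = 0)
  if h : x = 0 then 0 else (1 : ℚ) ⊗ₜ[ℤ] (Additive.ofMul (Units.mk0 x h))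

/-- The wedge `x₁ ∧ ⋯ ∧ xₙ ∈ Λ^n (F^× ⊗ ℚ)` of a family of elements of `F`. -/
noncomputable def wedgeF {F : Type u} [Field F] (n : ℕ) (x : Fin n → F) :
    ⋀[ℚ]^n (UnitsQ F) :=
  ⟨ExteriorAlgebra.ιMulti ℚ n (fun i => mkQ (x i)),
    ExteriorAlgebra.ιMulti_range ℚ n ⟨_, rfl⟩⟩

/-- Wedge of an abstract family of vectors. -/
noncomputable def wedgeV {M : Type u} [AddCommGroup M] [Module ℚ M] (n : ℕ) (v : Fin n → M) :
    ⋀[ℚ]^n M :=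
  ⟨ExteriorAlgebra.ιMulti ℚ n v, ExteriorAlgebra.ιMulti_range ℚ n ⟨_, rfl⟩⟩

/-- The product `a ∧ v₁ ∧ ⋯ ∧ v_q : Λ^r M` of an element `a ∈ Λ^p M` with `q` further vectors,
where `p + q = r`. -/
noncomputable def wedgeMulC {M : Type u} [AddCommGroup M] [Module ℚ M] (p q r : ℕ)
    (h : p + q = r) (a : ⋀[ℚ]^p M) (v : Fin q → M) : ⋀[ℚ]^r M :=
  ⟨a.1 * (ExteriorAlgebra.ιMulti ℚ q v : ExteriorAlgebra ℚ M), by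
    subst h
    have hmem : (ExteriorAlgebra.ιMulti ℚ q v : ExteriorAlgebra ℚ M) ∈
        (LinearMap.range (ι ℚ : M →ₗ[ℚ] ExteriorAlgebra ℚ M)) ^ q :=
      ExteriorAlgebra.ιMulti_range ℚ q ⟨_, rfl⟩
    have h2 := Submodule.mul_mem_mul a.2 hmem
    rw [← pow_add] at h2
    exact h2⟩

/-- The functorial map `Λ^n M → Λ^n N` induced by a linear map. -/
noncomputable def powMap {M N : Type u} [AddCommGroup M] [Module ℚ M]
    [AddCommGroup N] [Module ℚ N] (n : ℕ) (f : M →ₗ[ℚ] N) :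
    ⋀[ℚ]^n M →ₗ[ℚ] ⋀[ℚ]^n N :=
  (ExteriorAlgebra.map f).toLinearMap.restrict (p := ⋀[ℚ]^n M) (q := ⋀[ℚ]^n N)
    (by
      intro x hx
      have h : Submodule.map (ExteriorAlgebra.map f).toLinearMap (⋀[ℚ]^n M) ≤ ⋀[ℚ]^n N := by
        rw [← ExteriorAlgebra.ιMulti_span_fixedDegree, ← ExteriorAlgebra.ιMulti_span_fixedDegree,
          Submodule.map_span]
        refine Submodule.span_le.2 ?_
        rintro _ ⟨_, ⟨v, rfl⟩, rfl⟩
        exact Submodule.subset_span ⟨f ∘ v, (ExteriorAlgebra.map_apply_ιMulti f v).symm⟩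
      exact h ⟨x, hx, rfl⟩)

/-- The linear map `F^× ⊗ ℚ → K^× ⊗ ℚ` induced by a field embedding. -/
noncomputable def unitsQMap {F K : Type u} [Field F] [Field K] (j : F →+* K) :
    UnitsQ F →ₗ[ℚ] UnitsQ K :=
  LinearMap.baseChange ℚ
    ((MonoidHom.toAdditive (Units.map (j : F →* K))).toIntLinearMap)

section PreBloch

variable (F : Type u) [Field F]

/-- Auxiliary "difference" of two points of `P^1(F) = Option F` (`none` is `∞`),
used to define the cross-ratio. -/
def pdiff : Option F → Option F → F
  | some a, some b => a - b
  | _, _ => 1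

/-- The cross-ratio of four points of `P^1(F)`, as an element of `F`
(it lies in `F ∖ {0,1}` when the four points are distinct). -/
def crossRatio (x1 x2 x3 x4 : Option F) : F :=
  (pdiff F x1 x3 * pdiff F x2 x4) / (pdiff F x1 x4 * pdiff F x2 x3)

/-- The subspace of relations defining the pre-Bloch group: `{0}₂, {1}₂, {∞}₂` and the
five-term cross-ratio relations for five distinct points of `P^1(F)`. -/
def B2Rel : Submodule ℚ (Option F →₀ ℚ) :=
  Submodule.span ℚ
    ({Finsupp.single (some 0) 1, Finsupp.single (some 1) 1, Finsupp.single none 1} ∪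
      {r | ∃ x : Fin 5 → Option F, Function.Injective x ∧
        r = ∑ i : Fin 5, ((-1 : ℚ) ^ (i : ℕ)) •
          Finsupp.single (some (crossRatio F (x (i.succAbove 0)) (x (i.succAbove 1))
            (x (i.succAbove 2)) (x (i.succAbove 3)))) (1 : ℚ)})

/-- The pre-Bloch group `B₂(F)` (with ℚ-coefficients). -/
abbrev B2 : Type u := (Option F →₀ ℚ) ⧸ B2Rel F

/-- The generator `{x}₂` of the pre-Bloch group. -/
def B2.gen {F : Type u} [Field F] (x : F) : B2 F :=
  Submodule.Quotient.mk (Finsupp.single (some x) 1)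

end PreBloch

section Deltas

variable (F : Type u) [Field F]

/-- `d` is the differential `δ₂ : B₂(F) → Λ² F^×`, `{x}₂ ↦ x ∧ (1-x)`. -/
def IsDelta2 (d : B2 F →ₗ[ℚ] ⋀[ℚ]^2 (UnitsQ F)) : Prop :=
  ∀ x : F, x ≠ 0 → x ≠ 1 → d (B2.gen x) = wedgeF 2 ![x, 1 - x]

/-- `d` is the differential `δ₃ : B₂(F) ⊗ F^× → Λ³ F^×`, `{x}₂ ⊗ y ↦ x ∧ (1-x) ∧ y`. -/
def IsDelta3 (d : B2 F ⊗[ℚ] UnitsQ F →ₗ[ℚ] ⋀[ℚ]^3 (UnitsQ F)) : Prop :=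
  ∀ x y : F, x ≠ 0 → x ≠ 1 → y ≠ 0 →
    d (B2.gen x ⊗ₜ mkQ y) = wedgeF 3 ![x, 1 - x, y]

/-- `d` is the differential `δ₄ : B₂(F) ⊗ Λ² F^× → Λ⁴ F^×`,
`{x}₂ ⊗ (y ∧ z) ↦ x ∧ (1-x) ∧ y ∧ z`. -/
def IsDelta4 (d : B2 F ⊗[ℚ] (⋀[ℚ]^2 (UnitsQ F)) →ₗ[ℚ] ⋀[ℚ]^4 (UnitsQ F)) : Prop :=
  ∀ x y z : F, x ≠ 0 → x ≠ 1 → y ≠ 0 → z ≠ 0 →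
    d (B2.gen x ⊗ₜ wedgeF 2 ![y, z]) = wedgeF 4 ![x, 1 - x, y, z]

end Deltas

section Valuations

variable {F K : Type u} [Field F] [Field K]

/-- `ν` is (the additive form of) a discrete valuation on `F`:
a surjection onto `ℤ` defined on `F ∖ {0}`, multiplicative, and
satisfying the ultrametric inequality. -/
structure IsDVal (ν : F → ℤ) : Prop where
  map_mul : ∀ x y : F, x ≠ 0 → y ≠ 0 → ν (x * y) = ν x + ν y
  map_add : ∀ x y : F, x ≠ 0 → y ≠ 0 → x + y ≠ 0 → min (ν x) (ν y) ≤ ν (x + y)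
  surj : ∀ n : ℤ, ∃ x : F, x ≠ 0 ∧ ν x = n

/-- `res : F → K` realizes `K` as the residue field of the discrete valuation `ν`:
it is a surjective ring homomorphism on the valuation ring `O_ν` with kernel the
maximal ideal `m_ν` (and arbitrary elsewhere). -/
structure IsResidue (ν : F → ℤ) (res : F → K) : Prop where
  map_one : res 1 = 1
  map_add : ∀ x y : F, (x = 0 ∨ 0 ≤ ν x) → (y = 0 ∨ 0 ≤ ν y) →
    res (x + y) = res x + res y
  map_mul : ∀ x y : F, (x = 0 ∨ 0 ≤ ν x) → (y = 0 ∨ 0 ≤ ν y) →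
    res (x * y) = res x * res y
  zero_iff : ∀ x : F, (x = 0 ∨ 0 ≤ ν x) → (res x = 0 ↔ (x = 0 ∨ 0 < ν x))
  surj : ∀ z : K, ∃ x : F, (x = 0 ∨ 0 ≤ ν x) ∧ res x = z

/-- `D` is the tame symbol `∂_ν^{(n+1)} : Λ^{n+1} F^× → Λ^n K^×` attached to the discrete
valuation `ν` with residue field `K` (via `res`): it is characterized by
`∂(π ∧ u₂ ∧ ⋯ ∧ u_{n+1}) = ū₂ ∧ ⋯ ∧ ū_{n+1}` for a uniformizer `π` and units `uᵢ`. -/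
def IsTame (ν : F → ℤ) (res : F → K) (n : ℕ)
    (D : ⋀[ℚ]^(n + 1) (UnitsQ F) →ₗ[ℚ] ⋀[ℚ]^n (UnitsQ K)) : Prop :=
  ∀ (π : F) (u : Fin n → F), π ≠ 0 → ν π = 1 → (∀ i, u i ≠ 0 ∧ ν (u i) = 0) →
    D (wedgeF (n + 1) (Fin.cons π u)) = wedgeF n (fun i => res (u i))

/-- `D` is the tame symbol `∂_ν^{(2)} : Λ² F^× → K^×`, with target the residue field itself. -/
def IsTame2U (ν : F → ℤ) (res : F → K) (D : ⋀[ℚ]^2 (UnitsQ F) →ₗ[ℚ] UnitsQ K) : Prop :=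
  ∀ π u : F, π ≠ 0 → ν π = 1 → u ≠ 0 → ν u = 0 → D (wedgeF 2 ![π, u]) = mkQ (res u)

/-- `D` is the tame symbol `∂_ν : B₂(F) ⊗ F^× → B₂(K)`. -/
def IsTameB1 (ν : F → ℤ) (res : F → K)
    (D : B2 F ⊗[ℚ] UnitsQ F →ₗ[ℚ] B2 K) : Prop :=
  (∀ a b : F, a ≠ 0 → a ≠ 1 → ν a ≠ 0 → b ≠ 0 → D (B2.gen a ⊗ₜ mkQ b) = 0) ∧
  (∀ u b : F, u ≠ 0 → ν u = 0 → b ≠ 0 →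
    D (B2.gen u ⊗ₜ mkQ b) = -((ν b : ℚ) • B2.gen (res u)))

/-- `D` is the tame symbol `∂_ν : B₂(F) ⊗ Λ² F^× → B₂(K) ⊗ K^×`, where `D2` is the tame
symbol `∂_ν^{(2)}`. -/
def IsTameB2 (ν : F → ℤ) (res : F → K) (D2 : ⋀[ℚ]^2 (UnitsQ F) →ₗ[ℚ] UnitsQ K)
    (D : B2 F ⊗[ℚ] (⋀[ℚ]^2 (UnitsQ F)) →ₗ[ℚ] B2 K ⊗[ℚ] UnitsQ K) : Prop :=
  (∀ (a : F) (b : ⋀[ℚ]^2 (UnitsQ F)), a ≠ 0 → a ≠ 1 → ν a ≠ 0 → D (B2.gen a ⊗ₜ b) = 0) ∧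
  (∀ (u : F) (b : ⋀[ℚ]^2 (UnitsQ F)), u ≠ 0 → ν u = 0 →
    D (B2.gen u ⊗ₜ b) = -(B2.gen (res u) ⊗ₜ D2 b))

/-- `D` is the tame symbol `∂_ν : B₂(F) ⊗ Λ^{n+1} F^× → B₂(K) ⊗ Λ^n K^×`, where `Dn` is
the tame symbol `∂_ν^{(n+1)}`. -/
def IsTameBGen (ν : F → ℤ) (res : F → K) (n : ℕ)
    (Dn : ⋀[ℚ]^(n + 1) (UnitsQ F) →ₗ[ℚ] ⋀[ℚ]^n (UnitsQ K))
    (D : B2 F ⊗[ℚ] (⋀[ℚ]^(n + 1) (UnitsQ F)) →ₗ[ℚ] B2 K ⊗[ℚ] (⋀[ℚ]^n (UnitsQ K))) : Prop :=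
  (∀ (a : F) (b : ⋀[ℚ]^(n + 1) (UnitsQ F)), a ≠ 0 → a ≠ 1 → ν a ≠ 0 →
    D (B2.gen a ⊗ₜ b) = 0) ∧
  (∀ (u : F) (b : ⋀[ℚ]^(n + 1) (UnitsQ F)), u ≠ 0 → ν u = 0 →
    D (B2.gen u ⊗ₜ b) = -(B2.gen (res u) ⊗ₜ Dn b))

end Valuations

section Fields

variable (k F : Type u) [Field k] [Field F] [Algebra k F]

/-- `F` is a finitely generated extension of `k` of transcendence degree `1`. -/
def IsFields1 : Prop :=
  (∃ s : Finset F, IntermediateField.adjoin k (s : Set F) = ⊤) ∧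
  ∃ x : F, Transcendental k x ∧
    Algebra.IsAlgebraic (IntermediateField.adjoin k {x}) F

/-- `F` is a finitely generated extension of `k` of transcendence degree `2`. -/
def IsFields2 : Prop :=
  (∃ s : Finset F, IntermediateField.adjoin k (s : Set F) = ⊤) ∧
  ∃ x y : F, AlgebraicIndependent k ![x, y] ∧
    Algebra.IsAlgebraic (IntermediateField.adjoin k {x, y}) F

/-- `res : F → k` is the canonical residue map of `ν` onto `k`
(restricting to the identity on `k`). -/
def GoodResK (ν : F → ℤ) (res : F → k) : Prop :=
  IsResidue ν res ∧ ∀ c : k, res (algebraMap k F c) = c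

/-- The set `val(F)` of discrete valuations of `F` trivial on `k` with residue field `k`. -/
def ValInd : Type u :=
  {ν : F → ℤ // IsDVal ν ∧ (∀ c : k, c ≠ 0 → ν (algebraMap k F c) = 0) ∧
    ∃ res : F → k, GoodResK k F ν res}

/-- `h : Λ³ F^× → B₂(k)` is a lifted reciprocity map on `F ∈ Fields₁`:
(1) `-δ₂(h a) = Σ_{ν ∈ val(F)} ∂_ν^{(3)} a`;
(2) `h (δ₃ c) = Σ_{ν ∈ val(F)} ∂_ν c`;
(3) `h` vanishes on the image of `Λ² F^× ⊗ k^× → Λ³ F^×`. -/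
def IsLiftedRec (h : ⋀[ℚ]^3 (UnitsQ F) →ₗ[ℚ] B2 k) : Prop :=
  (∀ d2 : B2 k →ₗ[ℚ] ⋀[ℚ]^2 (UnitsQ k), IsDelta2 k d2 →
    ∀ res : ∀ _ : ValInd k F, F → k, (∀ v : ValInd k F, GoodResK k F v.1 (res v)) →
    ∀ D : ∀ _ : ValInd k F, ⋀[ℚ]^3 (UnitsQ F) →ₗ[ℚ] ⋀[ℚ]^2 (UnitsQ k),
      (∀ v : ValInd k F, IsTame v.1 (res v) 2 (D v)) →
    ∀ a : ⋀[ℚ]^3 (UnitsQ F), -(d2 (h a)) = ∑ᶠ v : ValInd k F, D v a) ∧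
  (∀ d3 : B2 F ⊗[ℚ] UnitsQ F →ₗ[ℚ] ⋀[ℚ]^3 (UnitsQ F), IsDelta3 F d3 →
    ∀ res : ∀ _ : ValInd k F, F → k, (∀ v : ValInd k F, GoodResK k F v.1 (res v)) →
    ∀ DB : ∀ _ : ValInd k F, B2 F ⊗[ℚ] UnitsQ F →ₗ[ℚ] B2 k,
      (∀ v : ValInd k F, IsTameB1 v.1 (res v) (DB v)) →
    ∀ c : B2 F ⊗[ℚ] UnitsQ F, h (d3 c) = ∑ᶠ v : ValInd k F, DB v c) ∧
  (∀ (y z : F) (c : k), y ≠ 0 → z ≠ 0 → c ≠ 0 →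
    h (wedgeF 3 ![y, z, algebraMap k F c]) = 0)

end Fields

/-- The degree `[K : j(F)]` of a field embedding. -/
noncomputable def fieldDeg {F K : Type u} [Field F] [Field K] (j : F →+* K) : ℕ :=
  letI : Algebra F K := j.toAlgebra
  Module.finrank F K

/-- The pullback `j^* h = (1/[F₂ : j(F₁)]) · h ∘ j_*` of a lifted reciprocity map. -/
noncomputable def pullRec (k F₁ F₂ : Type u) [Field k] [Field F₁] [Field F₂]
    (j : F₁ →+* F₂) (h : ⋀[ℚ]^3 (UnitsQ F₂) →ₗ[ℚ] B2 k) :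
    ⋀[ℚ]^3 (UnitsQ F₁) →ₗ[ℚ] B2 k :=
  ((fieldDeg j : ℚ))⁻¹ • (h ∘ₗ powMap 3 (unitsQMap j))

end ChowPrelim

noncomputable section ChowPrelim2

universe u

open scoped TensorProduct

/-- The monic irreducible polynomials over `F`, indexing the closed points of `𝔸¹_F`,
i.e. the general discrete valuations of `F(t)`. -/
def MonicIrr (F : Type u) [Field F] : Type u :=
  {p : Polynomial F // p.Monic ∧ Irreducible p}

/-- The residue field `F(p) = F[t]/(p)` of the valuation attached to a monic irreducible
polynomial `p`. -/
def ResField {F : Type u} [Field F] (p : MonicIrr F) : Type u := AdjoinRoot p.1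

noncomputable instance ResField.instField {F : Type u} [Field F] (p : MonicIrr F) :
    Field (ResField p) :=
  letI : Fact (Irreducible p.1) := ⟨p.2.2⟩
  inferInstanceAs (Field (AdjoinRoot p.1))

/-- `ν` is the discrete valuation of `F(t)` attached to the monic irreducible polynomial `p`. -/
def IsNuP {F : Type u} [Field F] (p : MonicIrr F) (ν : RatFunc F → ℤ) : Prop :=
  IsDVal ν ∧ ν (algebraMap (Polynomial F) (RatFunc F) p.1) = 1 ∧
    ∀ g : Polynomial F, g ≠ 0 → ¬(p.1 ∣ g) →
      ν (algebraMap (Polynomial F) (RatFunc F) g) = 0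

/-- `res` is the canonical residue map `F(t) → F(p)` of the valuation attached to `p`. -/
def IsResP {F : Type u} [Field F] (p : MonicIrr F) (ν : RatFunc F → ℤ)
    (res : RatFunc F → ResField p) : Prop :=
  IsResidue ν res ∧ ∀ g : Polynomial F,
    res (algebraMap (Polynomial F) (RatFunc F) g) =
      (AdjoinRoot.mk p.1 g : AdjoinRoot p.1)

/-- Bundled realization of the residue field of a discrete valuation `ν` on `L`
(trivial on `k`): a field `R` with a `k`-algebra structure together with the residue map. -/
structure ResData (k L : Type u) [Field k] [Field L] [Algebra k L] (ν : L → ℤ) :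
    Type (u + 1) where
  R : Type u
  [fieldR : Field R]
  [algR : Algebra k R]
  res : L → R
  isRes : IsResidue ν res
  compat : ∀ c : k, res (algebraMap k L c) = algebraMap k R c

attribute [instance] ResData.fieldR ResData.algR

/-- The set `dval(L)` of divisorial valuations of `L ∈ Fields₂`: discrete valuations trivial
on `k` whose residue field is a finitely generated extension of `k` of transcendence
degree `1`. -/
def DValInd (k L : Type u) [Field k] [Field L] [Algebra k L] : Type u :=
  {ν : L → ℤ // IsDVal ν ∧ (∀ c : k, c ≠ 0 → ν (algebraMap k L c) = 0) ∧
    ∃ rd : ResData k L ν, IsFields1 k rd.R}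

/-- A height-one prime ideal (in a domain). -/
def IsHeightOne {R : Type u} [CommRing R] (p : Ideal R) : Prop :=
  p.IsPrime ∧ p ≠ ⊥ ∧ ∀ q : Ideal R, q.IsPrime → q < p → q = ⊥

/-- `R/p` is regular, i.e. (for a one-dimensional local ring) the maximal ideal of `R/p`
is principal. -/
def QuotRegular {R : Type u} [CommRing R] [IsLocalRing R] (p : Ideal R) : Prop :=
  ∃ t : R, Ideal.map (Ideal.Quotient.mk p) (IsLocalRing.maximalIdeal R) =
    Ideal.span {Ideal.Quotient.mk p t}

/-- The height-one primes `p` of `R` with `R/p` regular. -/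
def RegPrimes (R : Type u) [CommRing R] [IsLocalRing R] : Type u :=
  {p : Ideal R // IsHeightOne p ∧ QuotRegular p}

instance RegPrimes.isPrime {R : Type u} [CommRing R] [IsLocalRing R] (p : RegPrimes R) :
    p.1.IsPrime := p.2.1.1

/-- The residue field `κ(p) = Frac(R/p)` of a prime `p`. -/
def ResFieldP {R : Type u} [CommRing R] [IsLocalRing R] [IsDomain R] (p : RegPrimes R) :
    Type u := FractionRing (R ⧸ p.1)

noncomputable instance ResFieldP.instField {R : Type u} [CommRing R] [IsLocalRing R]
    [IsDomain R] (p : RegPrimes R) : Field (ResFieldP p) :=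
  inferInstanceAs (Field (FractionRing (R ⧸ p.1)))

/-- `ν` is the discrete valuation `ν_p` of `L = Frac R` attached to a height-one prime `p`:
it is nonnegative on `R` and positive exactly on `p`. -/
def IsNuPrime {R L : Type u} [CommRing R] [Field L] [Algebra R L] (p : Ideal R)
    (ν : L → ℤ) : Prop :=
  IsDVal ν ∧ (∀ x : R, x ≠ 0 → 0 ≤ ν (algebraMap R L x)) ∧
    ∀ x : R, x ≠ 0 → (x ∈ p ↔ 0 < ν (algebraMap R L x))

/-- `res` is the canonical residue map `L → κ(p)` of the valuation `ν_p`. -/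
def IsResPrime {R L : Type u} [CommRing R] [IsLocalRing R] [IsDomain R] [Field L]
    [Algebra R L] (p : RegPrimes R) (ν : L → ℤ) (res : L → ResFieldP p) : Prop :=
  IsResidue ν res ∧ ∀ x : R,
    res (algebraMap R L x) =
      algebraMap (R ⧸ p.1) (FractionRing (R ⧸ p.1)) (Ideal.Quotient.mk p.1 x)

/-- `ν̄` is the discrete valuation of `κ(p)` attached to the discrete valuation ring `R/p`:
nonnegative on `R/p` and positive exactly on the image of the maximal ideal of `R`. -/
def IsNuBar {R : Type u} [CommRing R] [IsLocalRing R] [IsDomain R] (p : RegPrimes R)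
    (ν : ResFieldP p → ℤ) : Prop :=
  IsDVal ν ∧
  (∀ x : R ⧸ p.1, x ≠ 0 →
    0 ≤ ν (algebraMap (R ⧸ p.1) (FractionRing (R ⧸ p.1)) x)) ∧
  ∀ x : R, Ideal.Quotient.mk p.1 x ≠ 0 →
    (x ∈ IsLocalRing.maximalIdeal R ↔
      0 < ν (algebraMap (R ⧸ p.1) (FractionRing (R ⧸ p.1)) (Ideal.Quotient.mk p.1 x)))

/-- `res` is the canonical residue map `κ(p) → k` of the valuation `ν̄_p`
(restricting to the identity on `k`). -/
def IsResBar {k R : Type u} [Field k] [CommRing R] [IsLocalRing R] [IsDomain R]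
    [Algebra k R] (p : RegPrimes R) (ν : ResFieldP p → ℤ) (res : ResFieldP p → k) : Prop :=
  IsResidue ν res ∧ ∀ c : k,
    res (algebraMap (R ⧸ p.1) (FractionRing (R ⧸ p.1))
      (Ideal.Quotient.mk p.1 (algebraMap k R c))) = c

/-- The Steinberg relations subspace of `Λ^n F^×` (with ℚ-coefficients). -/
def MilnorRel (F : Type u) [Field F] : (n : ℕ) → Submodule ℚ (⋀[ℚ]^n (UnitsQ F))
  | 0 => ⊥
  | 1 => ⊥
  | (m + 2) => Submodule.span ℚ
      {x | ∃ (a : F) (v : Fin m → F), a ≠ 0 ∧ a ≠ 1 ∧ (∀ i, v i ≠ 0) ∧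
        x = wedgeF (m + 2) (Fin.cons a (Fin.cons (1 - a) v))}

/-- The rational Milnor K-group `K_n^M(F) ⊗ ℚ`: the quotient of `Λ^n F^×` by the
Steinberg relations. -/
def MilnorQ (F : Type u) [Field F] (n : ℕ) : Type u :=
  (⋀[ℚ]^n (UnitsQ F)) ⧸ MilnorRel F n

noncomputable instance MilnorQ.instAddCommGroup (F : Type u) [Field F] (n : ℕ) :
    AddCommGroup (MilnorQ F n) :=
  inferInstanceAs (AddCommGroup ((⋀[ℚ]^n (UnitsQ F)) ⧸ MilnorRel F n))

noncomputable instance MilnorQ.instModule (F : Type u) [Field F] (n : ℕ) :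
    Module ℚ (MilnorQ F n) :=
  inferInstanceAs (Module ℚ ((⋀[ℚ]^n (UnitsQ F)) ⧸ MilnorRel F n))

/-- The class of an element of `Λ^n F^×` in `K_n^M(F) ⊗ ℚ`. -/
def MilnorQ.mk {F : Type u} [Field F] {n : ℕ} (x : ⋀[ℚ]^n (UnitsQ F)) : MilnorQ F n :=
  Submodule.Quotient.mk x

end ChowPrelim2

open scoped TensorProduct

universe u

namespace S8

open Polynomial

/-- sealed copy of the exterior power -/
def Ex (n : ℕ) (M : Type u) [AddCommGroup M] [Module ℚ M] : Type u := ⋀[ℚ]^n M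

noncomputable instance Ex.instGroup (n : ℕ) (M : Type u) [AddCommGroup M] [Module ℚ M] :
    AddCommGroup (Ex n M) := inferInstanceAs (AddCommGroup (⋀[ℚ]^n M))

noncomputable instance Ex.instModule (n : ℕ) (M : Type u) [AddCommGroup M] [Module ℚ M] :
    Module ℚ (Ex n M) := inferInstanceAs (Module ℚ (⋀[ℚ]^n M))

/-- sealed copy of `K^× ⊗ ℚ` -/
def UA (K : Type u) [Field K] : Type u := UnitsQ K

noncomputable instance UA.instGroup (K : Type u) [Field K] :
    AddCommGroup (UA K) := inferInstanceAs (AddCommGroup (UnitsQ K))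

noncomputable instance UA.instModule (K : Type u) [Field K] :
    Module ℚ (UA K) := inferInstanceAs (Module ℚ (UnitsQ K))

noncomputable def mq {K : Type u} [Field K] (x : K) : UA K := mkQ x

section Wedge

variable {M N : Type u} [AddCommGroup M] [Module ℚ M] [AddCommGroup N] [Module ℚ N]

/-- An alternating map in one variable is a linear map. -/
noncomputable def c1 : (M [⋀^Fin 1]→ₗ[ℚ] N) →ₗ[ℚ] (M →ₗ[ℚ] N) where
  toFun f :=
    { toFun := fun a => (f.curryLeft a) (fun i => Fin.elim0 i)
      map_add' := by intro a b; rw [map_add]; rfl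
      map_smul' := by intro r a; rw [map_smul]; rfl }
  map_add' := by intro f g; ext a; rfl
  map_smul' := by intro r f; ext a; rfl

noncomputable def c2 : (M [⋀^Fin 2]→ₗ[ℚ] N) →ₗ[ℚ] (M →ₗ[ℚ] M →ₗ[ℚ] N) :=
  (LinearMap.compRight ℚ c1) ∘ₗ AlternatingMap.curryLeftLinearMap

noncomputable def c3 : (M [⋀^Fin 3]→ₗ[ℚ] N) →ₗ[ℚ] (M →ₗ[ℚ] M →ₗ[ℚ] M →ₗ[ℚ] N) :=
  (LinearMap.compRight ℚ c2) ∘ₗ AlternatingMap.curryLeftLinearMap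

noncomputable def c4 :
    (M [⋀^Fin 4]→ₗ[ℚ] N) →ₗ[ℚ] (M →ₗ[ℚ] M →ₗ[ℚ] M →ₗ[ℚ] M →ₗ[ℚ] N) :=
  (LinearMap.compRight ℚ c3) ∘ₗ AlternatingMap.curryLeftLinearMap

theorem c2_apply (f : M [⋀^Fin 2]→ₗ[ℚ] N) (a b : M) : c2 f a b = f ![a, b] := by
  change f _ = f _
  congr 1

theorem c3_apply (f : M [⋀^Fin 3]→ₗ[ℚ] N) (a b c : M) : c3 f a b c = f ![a, b, c] := by
  change f _ = f _
  congr 1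

theorem c4_apply (f : M [⋀^Fin 4]→ₗ[ℚ] N) (a b c d : M) : c4 f a b c d = f ![a, b, c, d] := by
  change f _ = f _
  congr 1

variable (M) in
noncomputable def ιM (n : ℕ) : M [⋀^Fin n]→ₗ[ℚ] Ex n M := exteriorPower.ιMulti ℚ n

variable (M) in
noncomputable def W2 : M →ₗ[ℚ] M →ₗ[ℚ] Ex 2 M := c2 (ιM M 2)
variable (M) in
noncomputable def W3 : M →ₗ[ℚ] M →ₗ[ℚ] M →ₗ[ℚ] Ex 3 M := c3 (ιM M 3)
variable (M) in
noncomputable def W4 : M →ₗ[ℚ] M →ₗ[ℚ] M →ₗ[ℚ] M →ₗ[ℚ] Ex 4 M := c4 (ιM M 4)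

theorem W2_self (a : M) : W2 M a a = 0 := by
  rw [W2, c2_apply]
  exact AlternatingMap.map_eq_zero_of_eq _ _ (i := 0) (j := 1) rfl (by decide)

theorem W4_12 (a c d : M) : W4 M a a c d = 0 := by
  rw [W4, c4_apply]
  exact AlternatingMap.map_eq_zero_of_eq _ _ (i := 0) (j := 1) rfl (by decide)
theorem W4_23 (a c d : M) : W4 M a c c d = 0 := by
  rw [W4, c4_apply]
  exact AlternatingMap.map_eq_zero_of_eq _ _ (i := 1) (j := 2) rfl (by decide)
theorem W4_34 (a c d : M) : W4 M a c d d = 0 := by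
  rw [W4, c4_apply]
  exact AlternatingMap.map_eq_zero_of_eq _ _ (i := 2) (j := 3) rfl (by decide)

theorem W2_swap (a b : M) : W2 M a b = - W2 M b a := by
  have h := W2_self (a + b)
  simp only [map_add, LinearMap.add_apply, W2_self, zero_add, add_zero] at h
  exact eq_neg_of_add_eq_zero_right h

theorem W4_s12 (a b c d : M) : W4 M a b c d = - W4 M b a c d := by
  have h := W4_12 (a + b) c d
  simp only [map_add, LinearMap.add_apply, W4_12, zero_add, add_zero] at h
  exact eq_neg_of_add_eq_zero_right h
theorem W4_s23 (a b c d : M) : W4 M a b c d = - W4 M a c b d := by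
  have h := W4_23 a (b + c) d
  simp only [map_add, LinearMap.add_apply, W4_23, zero_add, add_zero] at h
  exact eq_neg_of_add_eq_zero_right h
theorem W4_s34 (a b c d : M) : W4 M a b c d = - W4 M a b d c := by
  have h := W4_34 a b (c + d)
  simp only [map_add, LinearMap.add_apply, W4_34, zero_add, add_zero] at h
  exact eq_neg_of_add_eq_zero_right h

theorem W4_add1 (a a' b c d : M) : W4 M (a + a') b c d = W4 M a b c d + W4 M a' b c d := by
  rw [map_add]; rfl
theorem W4_add2 (a b b' c d : M) : W4 M a (b + b') c d = W4 M a b c d + W4 M a b' c d := by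
  rw [map_add]; rfl
theorem W4_add3 (a b c c' d : M) : W4 M a b (c + c') d = W4 M a b c d + W4 M a b c' d := by
  rw [map_add]; rfl
theorem W4_add4 (a b c d d' : M) : W4 M a b c (d + d') = W4 M a b c d + W4 M a b c d' := by
  rw [map_add]
theorem W4_sub1 (a a' b c d : M) : W4 M (a - a') b c d = W4 M a b c d - W4 M a' b c d := by
  rw [eq_sub_iff_add_eq, ← W4_add1, sub_add_cancel]
theorem W4_sub2 (a b b' c d : M) : W4 M a (b - b') c d = W4 M a b c d - W4 M a b' c d := by
  rw [eq_sub_iff_add_eq, ← W4_add2, sub_add_cancel]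
theorem W4_sub3 (a b c c' d : M) : W4 M a b (c - c') d = W4 M a b c d - W4 M a b c' d := by
  rw [eq_sub_iff_add_eq, ← W4_add3, sub_add_cancel]
theorem W4_sub4 (a b c d d' : M) : W4 M a b c (d - d') = W4 M a b c d - W4 M a b c d' := by
  rw [eq_sub_iff_add_eq, ← W4_add4, sub_add_cancel]
theorem W4_z1 (b c d : M) : W4 M 0 b c d = 0 := by
  rw [map_zero]; rfl
theorem W4_z2 (a c d : M) : W4 M a 0 c d = 0 := by
  rw [map_zero]; rfl
theorem W4_z3 (a b d : M) : W4 M a b 0 d = 0 := by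
  rw [map_zero]; rfl
theorem W4_z4 (a b c : M) : W4 M a b c 0 = 0 := by
  rw [map_zero]
theorem W3_z1 (b c : M) : W3 M 0 b c = 0 := by
  rw [map_zero]; rfl
theorem W3_z2 (a c : M) : W3 M a 0 c = 0 := by
  rw [map_zero]; rfl
theorem W2_add1 (a a' b : M) : W2 M (a + a') b = W2 M a b + W2 M a' b := by
  rw [map_add]; rfl

theorem W4_span : Submodule.span ℚ {x | ∃ a b c d : M, x = W4 M a b c d} = ⊤ := by
  have h : Submodule.span ℚ (Set.range (ιM M 4)) = ⊤ := exteriorPower.ιMulti_span ℚ 4 M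
  rw [eq_top_iff, ← h, Submodule.span_le]
  rintro _ ⟨v, rfl⟩
  refine Submodule.subset_span ⟨v 0, v 1, v 2, v 3, ?_⟩
  rw [W4, c4_apply]
  congr 1; ext i; fin_cases i <;> rfl

noncomputable def pM (n : ℕ) (f : M →ₗ[ℚ] N) : Ex n M →ₗ[ℚ] Ex n N := powMap n f

theorem powMap_W4 (f : M →ₗ[ℚ] N) (a b c d : M) :
    pM 4 f (W4 M a b c d) = W4 N (f a) (f b) (f c) (f d) := by
  rw [W4, W4, c4_apply, c4_apply]
  apply Subtype.ext
  change ExteriorAlgebra.map f (ExteriorAlgebra.ιMulti ℚ 4 _) = ExteriorAlgebra.ιMulti ℚ 4 _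
  rw [ExteriorAlgebra.map_apply_ιMulti]
  congr 1; ext i; fin_cases i <;> rfl

/-- contraction-type map `Λ³ N → Λ⁴ M`, `a ∧ b ∧ c ↦ q ∧ σ a ∧ σ b ∧ σ c`. -/
theorem exists_s (q : M) (σ : N →ₗ[ℚ] M) : ∃ s : Ex 3 N →ₗ[ℚ] Ex 4 M,
    ∀ a b c, s (W3 N a b c) = W4 M q (σ a) (σ b) (σ c) := by
  let g : N [⋀^Fin 3]→ₗ[ℚ] Ex 4 M := ((ιM M 4).curryLeft q).compLinearMap σ
  refine ⟨(exteriorPower.alternatingMapLinearEquiv g : ⋀[ℚ]^3 N →ₗ[ℚ] Ex 4 M), ?_⟩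
  intro a b c
  rw [W3, c3_apply, W4, c4_apply]
  refine (exteriorPower.alternatingMapLinearEquiv_apply_ιMulti g _).trans ?_
  change ιM M 4 _ = _
  congr 1; ext i; fin_cases i <;> rfl

end Wedge

section FieldLemmas

variable {K : Type u} [Field K]

theorem wedgeF2 (x y : K) : wedgeF 2 ![x, y] = W2 (UA K) (mq x) (mq y) := by
  rw [W2, c2_apply]
  apply Subtype.ext
  change ExteriorAlgebra.ιMulti ℚ 2 _ = ExteriorAlgebra.ιMulti ℚ 2 _
  congr 1; ext i; fin_cases i <;> rfl

theorem wedgeF3 (u v w : K) :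
    wedgeF 3 ![u, v, w] = W3 (UA K) (mq u) (mq v) (mq w) := by
  rw [W3, c3_apply]
  apply Subtype.ext
  change ExteriorAlgebra.ιMulti ℚ 3 _ = ExteriorAlgebra.ιMulti ℚ 3 _
  congr 1; ext i; fin_cases i <;> rfl

theorem wedgeF4 (x u v w : K) :
    wedgeF 4 ![x, u, v, w] = W4 (UA K) (mq x) (mq u) (mq v) (mq w) := by
  rw [W4, c4_apply]
  apply Subtype.ext
  change ExteriorAlgebra.ιMulti ℚ 4 _ = ExteriorAlgebra.ιMulti ℚ 4 _
  congr 1; ext i; fin_cases i <;> rfl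

theorem mkQ_zero : mkQ (0 : K) = 0 := by simp [mkQ]

theorem mkQ_of_ne {x : K} (h : x ≠ 0) :
    mkQ x = (1 : ℚ) ⊗ₜ[ℤ] (Additive.ofMul (Units.mk0 x h)) := by simp [mkQ, h]

theorem mkQ_mul {x y : K} (hx : x ≠ 0) (hy : y ≠ 0) : mkQ (x * y) = mkQ x + mkQ y := by
  rw [mkQ_of_ne hx, mkQ_of_ne hy, mkQ_of_ne (mul_ne_zero hx hy), ← TensorProduct.tmul_add,
    ← ofMul_mul]
  congr 2
  ext; rfl

theorem mkQ_one : mkQ (1 : K) = 0 := by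
  have h := mkQ_mul (one_ne_zero (α := K)) one_ne_zero
  rw [mul_one] at h
  exact left_eq_add.mp h

theorem mkQ_inv {x : K} (hx : x ≠ 0) : mkQ (x⁻¹) = - mkQ x := by
  have h := mkQ_mul hx (inv_ne_zero hx)
  rw [mul_inv_cancel₀ hx, mkQ_one] at h
  exact (neg_eq_of_add_eq_zero_right h.symm).symm

theorem mkQ_div {x y : K} (hx : x ≠ 0) (hy : y ≠ 0) : mkQ (x / y) = mkQ x - mkQ y := by
  rw [div_eq_mul_inv, mkQ_mul hx (inv_ne_zero hy), mkQ_inv hy, sub_eq_add_neg]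

theorem mkQ_neg (x : K) : mkQ (-x) = mkQ x := by
  by_cases hx : x = 0
  · simp [hx]
  have h1 : mkQ (-1 : K) = 0 := by
    have h := mkQ_mul (neg_ne_zero.2 (one_ne_zero (α := K))) (neg_ne_zero.2 one_ne_zero)
    rw [neg_mul_neg, mul_one, mkQ_one, ← two_smul ℚ] at h
    simpa using h.symm
  rw [← neg_one_mul, mkQ_mul (by simp) hx, h1, zero_add]

theorem mkQ_zpow {x : K} (hx : x ≠ 0) (n : ℤ) : mkQ (x ^ n) = (n : ℚ) • mkQ x := by
  induction n using Int.induction_on with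
  | zero => simp [mkQ_one]
  | succ n ih => rw [zpow_add_one₀ hx, mkQ_mul (zpow_ne_zero _ hx) hx, ih]; push_cast; module
  | pred n ih =>
    rw [zpow_sub_one₀ hx, mkQ_mul (zpow_ne_zero _ hx) (inv_ne_zero hx), ih, mkQ_inv hx]
    push_cast; module

theorem mkQ_span : Submodule.span ℚ {a | ∃ x : K, x ≠ 0 ∧ a = mkQ x} = ⊤ := by
  rw [eq_top_iff]
  rintro a -
  induction a using TensorProduct.induction_on with
  | zero => exact zero_mem _
  | add a b ha hb => exact add_mem ha hb
  | tmul r y =>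
    have h : r ⊗ₜ[ℤ] y = r • mkQ ((Additive.toMul y : Kˣ) : K) := by
      rw [mkQ_of_ne (Units.ne_zero _), TensorProduct.smul_tmul', smul_eq_mul, mul_one]
      congr 1
      rw [Units.mk0_val]; rfl
    rw [h]
    exact Submodule.smul_mem _ _ (Submodule.subset_span ⟨_, Units.ne_zero _, rfl⟩)

theorem unitsQMap_mkQ {K' : Type u} [Field K'] (j : K →+* K') (x : K) :
    unitsQMap j (mkQ x) = mkQ (j x) := by
  by_cases hx : x = 0
  · simp [hx, mkQ_zero]
  rw [mkQ_of_ne hx, mkQ_of_ne ((map_ne_zero j).2 hx), unitsQMap, LinearMap.baseChange_tmul]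
  congr 1
  change Additive.ofMul _ = Additive.ofMul _
  congr 1
  ext; rfl

theorem mq_zero : mq (0 : K) = 0 := mkQ_zero
theorem mq_mul {x y : K} (hx : x ≠ 0) (hy : y ≠ 0) : mq (x * y) = mq x + mq y := mkQ_mul hx hy
theorem mq_one : mq (1 : K) = 0 := mkQ_one
theorem mq_inv {x : K} (hx : x ≠ 0) : mq (x⁻¹) = - mq x := mkQ_inv hx
theorem mq_div {x y : K} (hx : x ≠ 0) (hy : y ≠ 0) : mq (x / y) = mq x - mq y := mkQ_div hx hy
theorem mq_neg (x : K) : mq (-x) = mq x := mkQ_neg x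
theorem mq_zpow {x : K} (hx : x ≠ 0) (n : ℤ) : mq (x ^ n) = (n : ℚ) • mq x := mkQ_zpow hx n
theorem mq_span : Submodule.span ℚ {a | ∃ x : K, x ≠ 0 ∧ a = mq x} = ⊤ := mkQ_span

noncomputable def uM {K' : Type u} [Field K'] (j : K →+* K') : UA K →ₗ[ℚ] UA K' := unitsQMap j
theorem uM_mq {K' : Type u} [Field K'] (j : K →+* K') (x : K) :
    uM j (mq x) = mq (j x) := unitsQMap_mkQ j x

/-- extension of additive functions on `K^×` to `K^× ⊗ ℚ` -/
theorem exists_ext {V : Type u} [AddCommGroup V] [Module ℚ V] (g : K → V)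
    (hg : ∀ x y, x ≠ 0 → y ≠ 0 → g (x * y) = g x + g y) :
    ∃ l : UA K →ₗ[ℚ] V, ∀ x, x ≠ 0 → l (mq x) = g x := by
  let h : Additive Kˣ →+ V := AddMonoidHom.mk' (fun x => g ((Additive.toMul x : Kˣ) : K))
    (by intro a b; exact hg _ _ (Units.ne_zero _) (Units.ne_zero _))
  refine ⟨(LinearMap.liftBaseChange ℚ h.toIntLinearMap : UnitsQ K →ₗ[ℚ] V), ?_⟩
  intro x hx
  change (LinearMap.liftBaseChange ℚ h.toIntLinearMap) (mkQ x) = _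
  rw [mkQ_of_ne hx, LinearMap.liftBaseChange_tmul, one_smul]
  rfl

end FieldLemmas

section Bridge

variable (K : Type u) [Field K]

/-- identification of the sealed copies with the original objects -/
noncomputable def eE (n : ℕ) : ⋀[ℚ]^n (UnitsQ K) ≃ₗ[ℚ] Ex n (UA K) :=
  LinearEquiv.refl ℚ (⋀[ℚ]^n (UnitsQ K))

noncomputable def eU : UnitsQ K ≃ₗ[ℚ] UA K := LinearEquiv.refl ℚ (UnitsQ K)

variable {K}

theorem eU_mkQ (x : K) : eU K (mkQ x) = mq x := rfl

theorem eE2 (x y : K) : eE K 2 (wedgeF 2 ![x, y]) = W2 (UA K) (mq x) (mq y) := wedgeF2 x y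

theorem eE3 (x y z : K) :
    eE K 3 (wedgeF 3 ![x, y, z]) = W3 (UA K) (mq x) (mq y) (mq z) := wedgeF3 x y z

theorem eE4 (x y z w : K) :
    eE K 4 (wedgeF 4 ![x, y, z, w]) = W4 (UA K) (mq x) (mq y) (mq z) (mq w) := wedgeF4 x y z w

theorem eE_pM {K' : Type u} [Field K'] (j : K →+* K') (x : ⋀[ℚ]^4 (UnitsQ K)) :
    pM 4 (uM j) (eE K 4 x) = eE K' 4 (powMap 4 (unitsQMap j) x) := rfl

end Bridge

attribute [irreducible] Ex UA W2 W3 W4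




section Val

variable {K : Type u} [Field K] {ν : K → ℤ}

theorem nu_one (h : IsDVal ν) : ν 1 = 0 := by
  have := h.map_mul 1 1 one_ne_zero one_ne_zero
  rw [mul_one] at this; omega

theorem nu_neg_one (h : IsDVal ν) : ν (-1) = 0 := by
  have := h.map_mul (-1) (-1) (by simp) (by simp)
  rw [neg_mul_neg, mul_one, nu_one h] at this; omega

theorem nu_neg (h : IsDVal ν) {x : K} (hx : x ≠ 0) : ν (-x) = ν x := by
  rw [← neg_one_mul, h.map_mul _ _ (by simp) hx, nu_neg_one h, zero_add]

theorem nu_inv (h : IsDVal ν) {x : K} (hx : x ≠ 0) : ν (x⁻¹) = - ν x := by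
  have := h.map_mul x x⁻¹ hx (inv_ne_zero hx)
  rw [mul_inv_cancel₀ hx, nu_one h] at this; omega

theorem nu_zpow (h : IsDVal ν) {x : K} (hx : x ≠ 0) (n : ℤ) : ν (x ^ n) = n * ν x := by
  induction n using Int.induction_on with
  | zero => simp [nu_one h]
  | succ n ih => rw [zpow_add_one₀ hx, h.map_mul _ _ (zpow_ne_zero _ hx) hx, ih]; ring
  | pred n ih =>
    rw [zpow_sub_one₀ hx, h.map_mul _ _ (zpow_ne_zero _ hx) (inv_ne_zero hx), ih, nu_inv h hx]
    ring

theorem exists_unit (h : IsDVal ν) {π f : K} (hπ : π ≠ 0) (hπ1 : ν π = 1) (hf : f ≠ 0) :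
    ∃ u : K, u ≠ 0 ∧ ν u = 0 ∧ mq f = (ν f : ℚ) • mq π + mq u := by
  refine ⟨f * π ^ (- ν f), mul_ne_zero hf (zpow_ne_zero _ hπ), ?_, ?_⟩
  · rw [h.map_mul _ _ hf (zpow_ne_zero _ hπ), nu_zpow h hπ, hπ1]; ring
  · rw [mq_mul hf (zpow_ne_zero _ hπ), mq_zpow hπ]; push_cast; module

end Val

section Context

/-- All the data attached to the places of `F(t)`. -/
structure Ctx (F : Type u) [Field F] where
  ν : ∀ q : MonicIrr F, RatFunc F → ℤ
  hν : ∀ q, IsNuP q (ν q)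
  res : ∀ q : MonicIrr F, RatFunc F → ResField q
  hres : ∀ q, IsResP q (ν q) (res q)
  D4 : ∀ q : MonicIrr F,
      Ex 4 (UA (RatFunc F)) →ₗ[ℚ] Ex 3 (UA (ResField q))
  hD4 : ∀ q π u v w, π ≠ 0 → ν q π = 1 → (u ≠ 0 ∧ ν q u = 0) → (v ≠ 0 ∧ ν q v = 0) →
      (w ≠ 0 ∧ ν q w = 0) → D4 q (W4 _ (mq π) (mq u) (mq v) (mq w)) =
      W3 _ (mq (res q u)) (mq (res q v)) (mq (res q w))
  D2 : ∀ q : MonicIrr F, Ex 2 (UA (RatFunc F)) →ₗ[ℚ] UA (ResField q)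
  hD2 : ∀ q π u, π ≠ 0 → ν q π = 1 → u ≠ 0 → ν q u = 0 →
      D2 q (W2 _ (mq π) (mq u)) = mq (res q u)

variable {F : Type u} [Field F]

/-- class of a polynomial in `F(t)^× ⊗ ℚ` -/
noncomputable def pl (f : F[X]) : UA (RatFunc F) := mq (algebraMap F[X] (RatFunc F) f)

theorem am_ne {f : F[X]} (h : f ≠ 0) : algebraMap F[X] (RatFunc F) f ≠ 0 :=
  RatFunc.algebraMap_ne_zero h

theorem pl_zero : pl (0 : F[X]) = 0 := by simp [pl, mq_zero]

theorem pl_mul {f g : F[X]} (hf : f ≠ 0) (hg : g ≠ 0) : pl (f * g) = pl f + pl g := by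
  rw [pl, map_mul, mq_mul (am_ne hf) (am_ne hg)]; rfl

theorem pl_span : Submodule.span ℚ (Set.range (pl : F[X] → _)) = ⊤ := by
  rw [eq_top_iff, ← mq_span, Submodule.span_le]
  rintro _ ⟨x, hx, rfl⟩
  have hd : x.denom ≠ 0 := RatFunc.denom_ne_zero x
  have hn : x.num ≠ 0 := RatFunc.num_ne_zero hx
  rw [← RatFunc.num_div_denom x, mq_div (am_ne hn) (am_ne hd)]
  exact sub_mem (Submodule.subset_span ⟨_, rfl⟩) (Submodule.subset_span ⟨_, rfl⟩)

/-- reduction modulo `q` -/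
noncomputable def rmk (q : MonicIrr F) : F[X] →+* ResField q := AdjoinRoot.mk q.1

theorem rmk_eq_zero (q : MonicIrr F) (g : F[X]) : rmk q g = 0 ↔ q.1 ∣ g :=
  AdjoinRoot.mk_eq_zero

theorem q_ne (q : MonicIrr F) : q.1 ≠ 0 := q.2.1.ne_zero

theorem q_pos (q : MonicIrr F) : 0 < q.1.natDegree := q.2.2.natDegree_pos

theorem exists_lift (q : MonicIrr F) (x : ResField q) :
    ∃ f : F[X], f.natDegree < q.1.natDegree ∧ rmk q f = x := by
  obtain ⟨g, hg⟩ := AdjoinRoot.mk_surjective (g := q.1) x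
  refine ⟨g %ₘ q.1, natDegree_modByMonic_lt _ q.2.1 ?_, ?_⟩
  · intro h; have := q_pos q; rw [h] at this; simp at this
  · rw [← hg]
    change rmk q _ = rmk q g
    rw [← sub_eq_zero, ← map_sub, rmk_eq_zero]
    rw [modByMonic_eq_sub_mul_div]
    simp

theorem not_dvd_of_lt (q : MonicIrr F) {f : F[X]} (hf : f ≠ 0)
    (h : f.natDegree < q.1.natDegree) : ¬ q.1 ∣ f := fun hd =>
  absurd (natDegree_le_of_dvd hd hf) (by omega)

theorem not_dvd_of_ne (q q' : MonicIrr F) (h : q' ≠ q) : ¬ q'.1 ∣ q.1 := by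
  intro hd
  apply h
  have := (q'.2.2.associated_of_dvd q.2.2 hd)
  exact Subtype.ext (eq_of_monic_of_associated q'.2.1 q.2.1 this)

namespace Ctx

variable (C : Ctx F) (q : MonicIrr F)

theorem nuq : C.ν q (algebraMap F[X] (RatFunc F) q.1) = 1 := (C.hν q).2.1

/-- `x` is a `q`-adic unit -/
def U (x : RatFunc F) : Prop := x ≠ 0 ∧ C.ν q x = 0

theorem U_poly {f : F[X]} (hf : f ≠ 0) (h : ¬ q.1 ∣ f) : C.U q (algebraMap _ _ f) :=
  ⟨am_ne hf, (C.hν q).2.2 f hf h⟩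

theorem res_poly (f : F[X]) : C.res q (algebraMap _ _ f) = rmk q f := (C.hres q).2 f

theorem nu_qu {u : RatFunc F} (hu : C.U q u) :
    C.ν q (algebraMap F[X] (RatFunc F) q.1 * u) = 1 := by
  rw [(C.hν q).1.map_mul _ _ (am_ne (q_ne q)) hu.1, C.nuq, hu.2, add_zero]

theorem D2_q {u : RatFunc F} (hu : C.U q u) :
    C.D2 q (W2 _ (pl q.1) (mq u)) = mq (C.res q u) := by
  have := C.hD2 q _ u (am_ne (q_ne q)) (C.nuq q) hu.1 hu.2
  exact this

theorem D2_unit {u v : RatFunc F} (hu : C.U q u) (hv : C.U q v) :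
    C.D2 q (W2 _ (mq u) (mq v)) = 0 := by
  have := C.hD2 q _ v (mul_ne_zero (am_ne (q_ne q)) hu.1) (C.nu_qu q hu) hv.1 hv.2
  rw [mq_mul (am_ne (q_ne q)) hu.1, W2_add1, map_add] at this
  have h2 := C.D2_q q hv
  rw [pl] at h2
  rw [h2] at this
  exact left_eq_add.mp this.symm

theorem D4_pi {π u v w : RatFunc F} (hπ : π ≠ 0) (h1 : C.ν q π = 1)
    (hu : C.U q u) (hv : C.U q v) (hw : C.U q w) :
    C.D4 q (W4 _ (mq π) (mq u) (mq v) (mq w)) =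
      W3 _ (mq (C.res q u)) (mq (C.res q v)) (mq (C.res q w)) := 
  C.hD4 q π u v w hπ h1 hu hv hw

theorem D4_q {u v w : RatFunc F} (hu : C.U q u) (hv : C.U q v) (hw : C.U q w) :
    C.D4 q (W4 _ (pl q.1) (mq u) (mq v) (mq w)) =
      W3 _ (mq (C.res q u)) (mq (C.res q v)) (mq (C.res q w)) :=
  C.D4_pi q (am_ne (q_ne q)) (C.nuq q) hu hv hw

theorem D4_unit {x u v w : RatFunc F} (hx : C.U q x)
    (hu : C.U q u) (hv : C.U q v) (hw : C.U q w) :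
    C.D4 q (W4 _ (mq x) (mq u) (mq v) (mq w)) = 0 := by
  have := C.D4_pi q (mul_ne_zero (am_ne (q_ne q)) hx.1) (C.nu_qu q hx) hu hv hw
  rw [mq_mul (am_ne (q_ne q)) hx.1, W4_add1, map_add] at this
  have h2 := C.D4_q q hu hv hw
  rw [pl] at h2
  rw [h2] at this
  exact left_eq_add.mp this.symm

theorem decomp {f : RatFunc F} (hf : f ≠ 0) :
    ∃ u, C.U q u ∧ mq f = (C.ν q f : ℚ) • pl q.1 + mq u := by
  obtain ⟨u, h0, h1, h2⟩ := exists_unit (C.hν q).1 (am_ne (q_ne q)) (C.nuq q) hf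
  exact ⟨u, ⟨h0, h1⟩, h2⟩

/-- induction principle: a linear condition holds everywhere as soon as it holds for `q`
and the units. -/
theorem lin_ext {N : Type u} [AddCommGroup N] [Module ℚ N] (f g : UA (RatFunc F) →ₗ[ℚ] N)
    (hq : f (pl q.1) = g (pl q.1)) (hu : ∀ u, C.U q u → f (mq u) = g (mq u)) : f = g := by
  apply LinearMap.ext_on (mq_span (K := RatFunc F))
  rintro _ ⟨x, hx, rfl⟩
  obtain ⟨u, h1, h2⟩ := C.decomp q hx
  simp [h2, hq, hu u h1]

/-- a symbol with an entry `≡ 1` has trivial residue. -/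
theorem D4_one {x : RatFunc F} (hx : C.U q x) (h1 : C.res q x = 1) (a b c) :
    C.D4 q (W4 _ (mq x) a b c) = 0 := by
  have key : ∀ a b c, C.D4 q (W4 _ (mq x) a b c) = 0 := by
    have e1 : ∀ u v, C.U q u → C.U q v → C.D4 q (W4 _ (mq x) (pl q.1) (mq u) (mq v)) = 0 := by
      intro u v hu hv
      rw [W4_s12, map_neg, C.D4_q q hx hu hv, h1, mq_one, W3_z1, neg_zero]
    have e3 : ∀ u, C.U q u → ∀ a b, C.D4 q (W4 _ (mq x) (mq u) a b) = 0 := by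
      intro u hu
      have e2 : ∀ v, C.U q v → ∀ b, C.D4 q (W4 _ (mq x) (mq u) (mq v) b) = 0 := by
        intro v hv b
        have := C.lin_ext q (C.D4 q ∘ₗ W4 _ (mq x) (mq u) (mq v)) 0
          (by
            simp only [LinearMap.comp_apply, LinearMap.zero_apply]
            rw [W4_s34, W4_s23, neg_neg, e1 u v hu hv])
          (by intro w hw; exact C.D4_unit q hx hu hv hw)
        exact LinearMap.congr_fun this b
      intro a b
      have := C.lin_ext q (C.D4 q ∘ₗ (W4 _ (mq x) (mq u)).flip b) 0
          (by
            have := C.lin_ext q (C.D4 q ∘ₗ W4 _ (mq x) (mq u) (pl q.1)) 0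
              (by simp [W4_34])
              (by
                intro v hv
                simp only [LinearMap.comp_apply, LinearMap.zero_apply]
                rw [W4_s23, map_neg, e1 u v hu hv, neg_zero])
            exact LinearMap.congr_fun this b)
          (by intro w hw; exact e2 w hw b)
      exact LinearMap.congr_fun this a
    intro a b c
    have hq : ∀ b c, C.D4 q (W4 _ (mq x) (pl q.1) b c) = 0 := by
      intro b c
      have := C.lin_ext q (C.D4 q ∘ₗ (W4 _ (mq x) (pl q.1)).flip c) 0
          (by simp [W4_23])
          (by
            intro u hu
            simp only [LinearMap.comp_apply, LinearMap.zero_apply, LinearMap.flip_apply]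
            rw [W4_s23, map_neg, e3 u hu, neg_zero])
      exact LinearMap.congr_fun this b
    have := C.lin_ext q (C.D4 q ∘ₗ ((W4 _ (mq x)).flip b).flip c) 0
      (hq b c) (fun u hu => e3 u hu b c)
    exact LinearMap.congr_fun this a
  exact key a b c

/-- integrality condition used for residues of `{x}₂` -/
def I (x : RatFunc F) : Prop := x = 0 ∨ C.ν q x = 0

theorem res_zero : C.res q 0 = 0 := ((C.hres q).1.zero_iff 0 (Or.inl rfl)).2 (Or.inl rfl)

theorem res_one : C.res q 1 = 1 := (C.hres q).1.map_one

/-- if `x` and `1 - x` are integral, the residue is compatible with `x ↦ 1 - x`. -/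
theorem res_sub {x : RatFunc F} (hx : x = 0 ∨ 0 ≤ C.ν q x)
    (hy : 1 - x = 0 ∨ 0 ≤ C.ν q (1 - x)) :
    C.res q (1 - x) = 1 - C.res q x := by
  have := (C.hres q).1.map_add x (1 - x) hx hy
  rw [add_sub_cancel, C.res_one] at this
  rw [this]; ring

theorem nu_one_sub {x : RatFunc F} (hx : x ≠ 0) (h : 0 ≤ C.ν q x) :
    1 - x = 0 ∨ 0 ≤ C.ν q (1 - x) := by
  by_cases h0 : 1 - x = 0
  · exact Or.inl h0
  right
  have := (C.hν q).1.map_add 1 (-x) one_ne_zero (neg_ne_zero.2 hx) (by rwa [← sub_eq_add_neg])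
  rw [nu_one (C.hν q).1, nu_neg (C.hν q).1 hx, ← sub_eq_add_neg] at this
  omega

theorem unit_of_pos {x : RatFunc F} (hx : x ≠ 0) (h : 0 < C.ν q x) :
    C.U q (1 - x) ∧ C.res q (1 - x) = 1 := by
  have h1 := C.nu_one_sub q hx h.le
  have hr : C.res q (1 - x) = 1 := by
    rw [C.res_sub q (Or.inr h.le) h1,
      ((C.hres q).1.zero_iff x (Or.inr h.le)).2 (Or.inr h), sub_zero]
  have hn : ¬ (1 - x = 0 ∨ 0 < C.ν q (1 - x)) := by
    rw [← (C.hres q).1.zero_iff _ h1, hr]; exact one_ne_zero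
  push Not at hn
  refine ⟨⟨hn.1, ?_⟩, hr⟩
  rcases h1 with h1 | h1
  · exact absurd h1 hn.1
  · omega

open Classical in
/-- residue of Steinberg symbols -/
theorem D4_steinberg (x : RatFunc F) (a b) :
    C.D4 q (W4 _ (mq x) (mq (1 - x)) a b) =
      if C.I q x then W3 _ (mq (C.res q x)) (mq (1 - C.res q x)) (C.D2 q (W2 _ a b)) else 0 := by
  by_cases hx0 : x = 0
  · have hI : C.I q x := Or.inl hx0
    rw [if_pos hI, hx0, C.res_zero, mq_zero, mq_zero, W4_z1, W3_z1, map_zero]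
  rcases lt_trichotomy (C.ν q x) 0 with h | h | h
  · have hI : ¬ C.I q x := by rintro (h' | h'); exacts [hx0 h', by omega]
    rw [if_neg hI]
    have hi : 0 < C.ν q (x⁻¹) := by rw [nu_inv (C.hν q).1 hx0]; omega
    obtain ⟨h1, h2⟩ := C.unit_of_pos q (inv_ne_zero hx0) hi
    have e : 1 - x = -(x * (1 - x⁻¹)) := by field_simp; ring
    rw [e, mq_neg, mq_mul hx0 h1.1, W4_add2,
      W4_12, zero_add, W4_s12, map_neg, C.D4_one q h1 h2, neg_zero]
  · have hI : C.I q x := Or.inr h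
    rw [if_pos hI]
    have h1 := C.nu_one_sub q hx0 h.ge
    have hr := C.res_sub q (Or.inr h.ge) h1
    by_cases hu : C.U q (1 - x)
    · rw [← hr]
      have hx : C.U q x := ⟨hx0, h⟩
      have e1 : ∀ u, C.U q u → ∀ b, C.D4 q (W4 _ (mq x) (mq (1 - x)) (mq u) b) =
          W3 _ (mq (C.res q x)) (mq (C.res q (1 - x))) (C.D2 q (W2 _ (mq u) b)) := by
        intro u hu' b
        have := C.lin_ext q (C.D4 q ∘ₗ W4 _ (mq x) (mq (1 - x)) (mq u))
          (W3 _ (mq (C.res q x)) (mq (C.res q (1 - x))) ∘ₗ C.D2 q ∘ₗ W2 _ (mq u))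
          (by
            simp only [LinearMap.comp_apply]
            rw [W4_s34, W4_s23, W4_s12, W2_swap]
            simp only [map_neg, neg_neg]
            rw [C.D4_q q hx hu hu', C.D2_q q hu'])
          (by
            intro v hv
            simp only [LinearMap.comp_apply]
            rw [C.D4_unit q hx hu hu' hv, C.D2_unit q hu' hv, map_zero])
        exact LinearMap.congr_fun this b
      have := C.lin_ext q (C.D4 q ∘ₗ (W4 _ (mq x) (mq (1 - x))).flip b)
          (W3 _ (mq (C.res q x)) (mq (C.res q (1 - x))) ∘ₗ C.D2 q ∘ₗ (W2 _).flip b)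
          (by
            have := C.lin_ext q (C.D4 q ∘ₗ W4 _ (mq x) (mq (1 - x)) (pl q.1))
              (W3 _ (mq (C.res q x)) (mq (C.res q (1 - x))) ∘ₗ C.D2 q ∘ₗ W2 _ (pl q.1))
              (by simp [W4_34, W2_self])
              (by
                intro v hv
                simp only [LinearMap.comp_apply]
                rw [W4_s23, W4_s12, neg_neg, C.D4_q q hx hu hv, C.D2_q q hv])
            exact LinearMap.congr_fun this b)
          (by intro u hu'; exact e1 u hu' b)
      exact LinearMap.congr_fun this a
    · have hz : C.res q (1 - x) = 0 := by
        rw [(C.hres q).1.zero_iff _ h1]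
        rcases h1 with h1 | h1
        · exact Or.inl h1
        · by_cases h0 : 1 - x = 0
          · exact Or.inl h0
          · right
            rcases h1.lt_or_eq with h2 | h2
            · exact h2
            · exact absurd ⟨h0, h2.symm⟩ hu
      have hx1 : C.res q x = 1 := by
        rw [hz] at hr; exact (sub_eq_zero.1 hr.symm).symm
      rw [C.D4_one q ⟨hx0, h⟩ hx1, hx1, mq_one, W3_z1]
  · have hI : ¬ C.I q x := by rintro (h' | h'); exacts [hx0 h', by omega]
    rw [if_neg hI]
    obtain ⟨h1, h2⟩ := C.unit_of_pos q hx0 h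
    rw [W4_s12, map_neg, C.D4_one q h1 h2, neg_zero]

end Ctx

end Context

section Free

variable {F : Type u} [Field F]

variable (F) in
/-- free module on triples -/
abbrev Z : Type u := (RatFunc F × F[X] × F[X]) →₀ ℚ

variable (F) in
/-- the differential on triples -/
noncomputable def dl : Z F →ₗ[ℚ] Ex 4 (UA (RatFunc F)) :=
  Finsupp.linearCombination ℚ
    (fun t => W4 _ (mq t.1) (mq (1 - t.1)) (pl t.2.1) (pl t.2.2))

theorem dl_single (t : RatFunc F × F[X] × F[X]) :
    dl F (Finsupp.single t 1) = W4 _ (mq t.1) (mq (1 - t.1)) (pl t.2.1) (pl t.2.2) := by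
  rw [dl, Finsupp.linearCombination_single, one_smul]

theorem finite_dvd {h : F[X]} (hh : h ≠ 0) : {q : MonicIrr F | q.1 ∣ h}.Finite := by
  classical
  have hf : (↑(UniqueFactorizationMonoid.normalizedFactors h).toFinset : Set F[X]).Finite :=
    Finset.finite_toSet _
  refine (hf.preimage (f := fun q : MonicIrr F => q.1) Subtype.val_injective.injOn).subset ?_
  intro q hq
  rw [Set.mem_preimage, Finset.mem_coe, Multiset.mem_toFinset]
  rw [Polynomial.mem_normalizedFactors_iff hh]
  exact ⟨q.2.2, q.2.1, hq⟩

/-- the module of polynomials symbols of degree `< n` -/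
noncomputable def Ln (F : Type u) [Field F] (n : ℕ) : Submodule ℚ (Ex 4 (UA (RatFunc F))) :=
  Submodule.span ℚ {x | ∃ a b c d : F[X], a.natDegree < n ∧ b.natDegree < n ∧ c.natDegree < n ∧
    d.natDegree < n ∧ x = W4 _ (pl a) (pl b) (pl c) (pl d)}

noncomputable def Mn (F : Type u) [Field F] (n : ℕ) : Submodule ℚ (Ex 4 (UA (RatFunc F))) :=
  Submodule.span ℚ {x | ∃ a b c d : F[X], a.natDegree ≤ n ∧ b.natDegree < n ∧ c.natDegree < n ∧
    d.natDegree < n ∧ x = W4 _ (pl a) (pl b) (pl c) (pl d)}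

theorem Ln_mem {n : ℕ} {a b c d : F[X]} (ha : a.natDegree < n) (hb : b.natDegree < n)
    (hc : c.natDegree < n) (hd : d.natDegree < n) :
    W4 _ (pl a) (pl b) (pl c) (pl d) ∈ Ln F n :=
  Submodule.subset_span ⟨a, b, c, d, ha, hb, hc, hd, rfl⟩

theorem Mn_mem {n : ℕ} {a b c d : F[X]} (ha : a.natDegree ≤ n) (hb : b.natDegree < n)
    (hc : c.natDegree < n) (hd : d.natDegree < n) :
    W4 _ (pl a) (pl b) (pl c) (pl d) ∈ Mn F n :=
  Submodule.subset_span ⟨a, b, c, d, ha, hb, hc, hd, rfl⟩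

theorem Ln_le_Mn (n : ℕ) : Ln F n ≤ Mn F n := by
  rw [Ln, Submodule.span_le]
  rintro _ ⟨a, b, c, d, ha, hb, hc, hd, rfl⟩
  exact Mn_mem ha.le hb hc hd

theorem Mn_le_Ln {m n : ℕ} (h : m < n) : Mn F m ≤ Ln F n := by
  rw [Mn, Submodule.span_le]
  rintro _ ⟨a, b, c, d, ha, hb, hc, hd, rfl⟩
  exact Ln_mem (by omega) (by omega) (by omega) (by omega)

theorem Mn_mono {m n : ℕ} (h : m ≤ n) : Mn F m ≤ Mn F n := by
  rw [Mn, Submodule.span_le]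
  rintro _ ⟨a, b, c, d, ha, hb, hc, hd, rfl⟩
  exact Mn_mem (by omega) (by omega) (by omega) (by omega)

theorem Ln_mono {m n : ℕ} (h : m ≤ n) : Ln F m ≤ Ln F n := by
  rw [Ln, Submodule.span_le]
  rintro _ ⟨a, b, c, d, ha, hb, hc, hd, rfl⟩
  exact Ln_mem (by omega) (by omega) (by omega) (by omega)

theorem one_sub_poly (f : F[X]) : mq (1 - algebraMap F[X] (RatFunc F) f) = pl (1 - f) := by
  rw [pl, map_sub, map_one]

theorem deg_one_sub {f : F[X]} {n : ℕ} (h : f.natDegree < n) : (1 - f).natDegree < n := by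
  have := natDegree_sub_le (1 : F[X]) f
  rw [natDegree_one] at this
  omega

namespace Ctx

variable (C : Ctx F) (q : MonicIrr F)

open Classical in
/-- free residue of a triple -/
noncomputable def dt0 (t : RatFunc F × F[X] × F[X]) : ResField q →₀ UA (ResField q) :=
  if C.I q t.1 then
    - Finsupp.single (C.res q t.1) (C.D2 q (W2 _ (pl t.2.1) (pl t.2.2)))
  else 0

/-- free residue -/
noncomputable def dt : Z F →ₗ[ℚ] (ResField q →₀ UA (ResField q)) :=
  Finsupp.linearCombination ℚ (C.dt0 q)

theorem dt_single (t : RatFunc F × F[X] × F[X]) :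
    C.dt q (Finsupp.single t 1) = C.dt0 q t := by
  rw [dt, Finsupp.linearCombination_single, one_smul]

/-- differential on the residue field -/
noncomputable def d3 : (ResField q →₀ UA (ResField q)) →ₗ[ℚ] Ex 3 (UA (ResField q)) :=
  Finsupp.lsum ℚ (fun x => W3 _ (mq x) (mq (1 - x)))

theorem d3_single (x : ResField q) (y) : d3 q (Finsupp.single x y) =
    W3 _ (mq x) (mq (1 - x)) y := by
  rw [d3, Finsupp.lsum_single]

theorem D4_dl (z : Z F) : C.D4 q (dl F z) = - d3 q (C.dt q z) := by
  have : C.D4 q ∘ₗ dl F = - (d3 q ∘ₗ C.dt q) := by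
    apply Finsupp.lhom_ext'
    intro t
    apply LinearMap.ext_ring
    simp only [LinearMap.comp_apply, LinearMap.neg_apply, Finsupp.lsingle_apply]
    rw [dl_single, C.dt_single, C.D4_steinberg, dt0]
    split_ifs
    · rw [map_neg, neg_neg, d3_single]
    · rw [map_zero, neg_zero]
  have h := LinearMap.congr_fun this z
  rw [LinearMap.neg_apply] at h
  exact h

theorem D2_pl {f g : F[X]} (h : C.D2 q (W2 _ (pl f) (pl g)) ≠ 0) :
    f ≠ 0 ∧ g ≠ 0 ∧ (q.1 ∣ f ∨ q.1 ∣ g) := by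
  have hf : f ≠ 0 := by
    rintro rfl
    apply h
    rw [pl_zero, map_zero, LinearMap.zero_apply, map_zero]
  have hg : g ≠ 0 := by
    rintro rfl
    apply h
    rw [pl_zero, map_zero, map_zero]
  refine ⟨hf, hg, ?_⟩
  by_contra hn
  push Not at hn
  exact h (C.D2_unit q (C.U_poly q hf hn.1) (C.U_poly q hg hn.2))

theorem dt0_ne {t : RatFunc F × F[X] × F[X]} (h : C.dt0 q t ≠ 0) :
    t.2.1 ≠ 0 ∧ t.2.2 ≠ 0 ∧ (q.1 ∣ t.2.1 ∨ q.1 ∣ t.2.2) := by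
  apply C.D2_pl q
  intro h0
  apply h
  rw [dt0, h0, Finsupp.single_zero, neg_zero, ite_self]

theorem dt_finite (z : Z F) : {q : MonicIrr F | C.dt q z ≠ 0}.Finite := by
  induction z using Finsupp.induction_linear with
  | zero => simp
  | add z w hz hw =>
    refine (hz.union hw).subset ?_
    intro q hq
    by_contra hn
    simp only [Set.mem_union, Set.mem_ofPred_eq, not_or, not_not] at hn
    exact hq (by rw [map_add, hn.1, hn.2, add_zero])
  | single t r =>
    have hs : {q : MonicIrr F | C.dt0 q t ≠ 0}.Finite := by
      by_cases h : t.2.1 * t.2.2 = 0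
      · convert Set.finite_empty (α := MonicIrr F)
        ext q
        simp only [Set.mem_ofPred_eq, Set.mem_empty_iff_false, iff_false]
        intro hq
        have := C.dt0_ne q hq
        exact mul_ne_zero this.1 this.2.1 h
      · refine (finite_dvd h).subset ?_
        intro q hq
        rcases (C.dt0_ne q hq).2.2 with h | h
        · exact Dvd.dvd.mul_right h _
        · exact Dvd.dvd.mul_left h _
    refine hs.subset ?_
    intro q hq h0
    apply hq
    rw [dt, Finsupp.linearCombination_single, h0, smul_zero]

open Classical in
theorem lemA0 (P : MonicIrr F → Prop) (S : Submodule ℚ (Ex 4 (UA (RatFunc F))))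
    (hC : ∀ q, P q → ∀ ρ, ∃ z, C.dt q z = ρ ∧ (∀ q', q' ≠ q → C.dt q' z = 0) ∧ dl F z ∈ S)
    (z : Z F) :
    ∃ y, dl F y ∈ S ∧ ∀ q, C.dt q y = if P q then C.dt q z else 0 := by
  have hC' : ∀ q, ∃ w, P q → (C.dt q w = C.dt q z ∧ (∀ q', q' ≠ q → C.dt q' w = 0) ∧
      dl F w ∈ S) := by
    intro q
    by_cases h : P q
    · obtain ⟨w, hw⟩ := hC q h (C.dt q z)
      exact ⟨w, fun _ => hw⟩
    · exact ⟨0, fun h' => absurd h' h⟩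
  choose w hw using hC'
  refine ⟨∑ q ∈ (C.dt_finite z).toFinset.filter P, w q, ?_, ?_⟩
  · rw [map_sum]
    exact Submodule.sum_mem _ (fun q hq => (hw q (Finset.mem_filter.1 hq).2).2.2)
  · intro q
    rw [map_sum]
    by_cases hP : P q
    · rw [if_pos hP, Finset.sum_eq_single q]
      · exact (hw q hP).1
      · intro q' hq' hne
        exact (hw q' (Finset.mem_filter.1 hq').2).2.1 q hne.symm
      · intro hn
        rw [(hw q hP).1]
        by_contra h0
        exact hn (Finset.mem_filter.2 ⟨by simpa using h0, hP⟩)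
    · rw [if_neg hP]
      apply Finset.sum_eq_zero
      intro q' hq'
      refine (hw q' (Finset.mem_filter.1 hq').2).2.1 q ?_
      rintro rfl
      exact hP (Finset.mem_filter.1 hq').2

/-- the submodule of realizable residues -/
noncomputable def Rz (S : Submodule ℚ (Ex 4 (UA (RatFunc F)))) :
    Submodule ℚ (ResField q →₀ UA (ResField q)) where
  carrier := {ρ | ∃ z, C.dt q z = ρ ∧ (∀ q', q' ≠ q → C.dt q' z = 0) ∧ dl F z ∈ S}
  zero_mem' := ⟨0, map_zero _, fun _ _ => map_zero _, by rw [map_zero]; exact zero_mem _⟩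
  add_mem' := by
    rintro a b ⟨z, h1, h2, h3⟩ ⟨w, h4, h5, h6⟩
    refine ⟨z + w, by rw [map_add, h1, h4], fun q' h => by rw [map_add, h2 q' h, h5 q' h, add_zero],
      by rw [map_add]; exact add_mem h3 h6⟩
  smul_mem' := by
    rintro r a ⟨z, h1, h2, h3⟩
    refine ⟨r • z, by rw [map_smul, h1], fun q' h => by rw [map_smul, h2 q' h, smul_zero],
      by rw [map_smul]; exact Submodule.smul_mem _ _ h3⟩

theorem I_poly {f : F[X]} (h : f.natDegree < q.1.natDegree) :
    C.I q (algebraMap _ _ f) := by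
  by_cases hf : f = 0
  · left; rw [hf, map_zero]
  · right; exact (C.U_poly q hf (not_dvd_of_lt q hf h)).2

theorem lemC (n : ℕ) : ∀ q : MonicIrr F, q.1.natDegree = n → ∀ ρ, ∃ z, C.dt q z = ρ ∧
    (∀ q', q' ≠ q → C.dt q' z = 0) ∧ dl F z ∈ Mn F n := by
  induction n using Nat.strong_induction_on with
  | _ n ih =>
  intro q hq ρ
  have hn : 0 < n := hq ▸ q_pos q
  suffices h : ρ ∈ C.Rz q (Mn F n) from h
  have hs : ∀ x : ResField q, ∀ y, Finsupp.single x y ∈ C.Rz q (Mn F n) := by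
    intro x y
    suffices h : (⊤ : Submodule ℚ (UA (ResField q))) ≤
        (C.Rz q (Mn F n)).comap (Finsupp.lsingle x) from h (Submodule.mem_top (x := y))
    rw [← mq_span, Submodule.span_le]
    rintro _ ⟨y, hy, rfl⟩
    obtain ⟨f, hf, hfx⟩ := exists_lift q x
    obtain ⟨g, hg, hgy⟩ := exists_lift q y
    have hg0 : g ≠ 0 := by rintro rfl; rw [map_zero] at hgy; exact hy hgy.symm
    let z0 : Z F := - Finsupp.single (algebraMap _ _ f, q.1, g) 1
    obtain ⟨w, hw1, hw2⟩ := C.lemA0 (fun q' => q'.1.natDegree < n) (Mn F n)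
      (fun q' h ρ' => by
        obtain ⟨z, h1, h2, h3⟩ := ih _ h q' rfl ρ'
        exact ⟨z, h1, h2, Mn_mono h.le h3⟩) z0
    refine ⟨z0 - w, ?_, ?_, ?_⟩
    · rw [map_sub, hw2, if_neg (by omega), sub_zero, map_neg, C.dt_single, dt0,
        if_pos (C.I_poly q hf), neg_neg]
      simp only []
      have e := C.D2_q q (C.U_poly q hg0 (not_dvd_of_lt q hg0 hg))
      rw [C.res_poly, hgy] at e
      rw [C.res_poly, hfx, Finsupp.lsingle_apply]
      congr 1
    · intro q' hne
      rw [map_sub, hw2]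
      split_ifs with h
      · rw [sub_self]
      · rw [sub_zero, map_neg, C.dt_single, neg_eq_zero]
        by_contra h0
        rcases (C.dt0_ne q' h0).2.2 with h1 | h1
        · exact not_dvd_of_ne q q' hne h1
        · exact not_dvd_of_lt q' hg0 (by omega) h1
    · rw [map_sub]
      refine sub_mem ?_ hw1
      rw [map_neg, dl_single]
      refine neg_mem ?_
      simp only []
      rw [one_sub_poly]
      change W4 _ (pl f) _ _ _ ∈ _
      rw [W4_s23, W4_s12, neg_neg]
      exact Mn_mem hq.le (hq ▸ hf) (deg_one_sub (hq ▸ hf)) (hq ▸ hg)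
  induction ρ using Finsupp.induction_linear with
  | zero => exact zero_mem _
  | add a b ha hb => exact add_mem ha hb
  | single x y => exact hs x y

/-- the image of the residue-free elements -/
noncomputable def T : Submodule ℚ (Ex 4 (UA (RatFunc F))) :=
  Submodule.map (dl F) (⨅ q, LinearMap.ker (C.dt q))

theorem T_mem {z : Z F} (h : ∀ q, C.dt q z = 0) : dl F z ∈ C.T :=
  ⟨z, by simpa [Submodule.mem_iInf] using h, rfl⟩

theorem D4_T {b} (h : b ∈ C.T) : C.D4 q b = 0 := by
  obtain ⟨z, hz, rfl⟩ := h
  rw [C.D4_dl]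
  simp only [SetLike.mem_coe, Submodule.mem_iInf, LinearMap.mem_ker] at hz
  rw [hz q, map_zero, neg_zero]

theorem lemA (n : ℕ) (S : Submodule ℚ (Ex 4 (UA (RatFunc F)))) (hS : ∀ m, m < n → Mn F m ≤ S)
    (z : Z F) (hz : ∀ q : MonicIrr F, n ≤ q.1.natDegree → C.dt q z = 0) :
    dl F z ∈ S ⊔ C.T := by
  obtain ⟨w, hw1, hw2⟩ := C.lemA0 (fun q' => q'.1.natDegree < n) S
      (fun q' h ρ' => by
        obtain ⟨z, h1, h2, h3⟩ := C.lemC _ q' rfl ρ'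
        exact ⟨z, h1, h2, hS _ h h3⟩) z
  have e : dl F z = dl F w + dl F (z - w) := by rw [map_sub]; abel
  rw [e]
  refine Submodule.add_mem_sup hw1 (C.T_mem ?_)
  intro q
  rw [map_sub, hw2]
  split_ifs with h
  · rw [sub_self]
  · rw [sub_zero]; exact hz q (by omega)

/-- Lemma A for a single symbol. -/
theorem lemA1 (n : ℕ) (S : Submodule ℚ (Ex 4 (UA (RatFunc F)))) (hS : ∀ m, m < n → Mn F m ≤ S)
    (x : RatFunc F) {v w : F[X]} (hv : v.natDegree < n) (hw : w.natDegree < n) :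
    W4 _ (mq x) (mq (1 - x)) (pl v) (pl w) ∈ S ⊔ C.T := by
  have := C.lemA n S hS (Finsupp.single (x, v, w) 1) ?_
  · rwa [dl_single] at this
  · intro q hq
    rw [C.dt_single]
    by_contra h0
    obtain ⟨h1, h2, h3 | h3⟩ := C.dt0_ne q h0
    · exact not_dvd_of_lt q h1 (lt_of_lt_of_le hv hq) h3
    · exact not_dvd_of_lt q h2 (lt_of_lt_of_le hw hq) h3

end Ctx

end Free

section Induction

variable {F : Type u} [Field F]

theorem W4_span_mem {M : Type u} [AddCommGroup M] [Module ℚ M] {S1 S2 S3 S4 : Set M}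
    {N : Submodule ℚ (Ex 4 M)}
    (h : ∀ a ∈ S1, ∀ b ∈ S2, ∀ c ∈ S3, ∀ d ∈ S4, W4 M a b c d ∈ N)
    {a b c d : M} (ha : a ∈ Submodule.span ℚ S1) (hb : b ∈ Submodule.span ℚ S2)
    (hc : c ∈ Submodule.span ℚ S3) (hd : d ∈ Submodule.span ℚ S4) : W4 M a b c d ∈ N := by
  have h4 : ∀ a ∈ S1, ∀ b ∈ S2, ∀ c ∈ S3, W4 M a b c d ∈ N := by
    intro a ha b hb c hc
    have : Submodule.span ℚ S4 ≤ N.comap (W4 M a b c) :=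
      Submodule.span_le.2 fun d hd => h a ha b hb c hc d hd
    exact this hd
  have h3 : ∀ a ∈ S1, ∀ b ∈ S2, W4 M a b c d ∈ N := by
    intro a ha b hb
    have : Submodule.span ℚ S3 ≤ N.comap ((W4 M a b).flip d) :=
      Submodule.span_le.2 fun c hc => h4 a ha b hb c hc
    exact this hc
  have h2 : ∀ a ∈ S1, W4 M a b c d ∈ N := by
    intro a ha
    have : Submodule.span ℚ S2 ≤ N.comap (((W4 M a).flip c).flip d) :=
      Submodule.span_le.2 fun b hb => h3 a ha b hb
    exact this hb
  have : Submodule.span ℚ S1 ≤ N.comap ((((W4 M).flip b).flip c).flip d) :=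
    Submodule.span_le.2 fun a ha => h2 a ha
  exact this ha

/-- classes of polynomials of degree `< d` -/
noncomputable def Ad (F : Type u) [Field F] (d : ℕ) : Submodule ℚ (UA (RatFunc F)) :=
  Submodule.span ℚ {a | ∃ f : F[X], f.natDegree < d ∧ a = pl f}

theorem Ad_mem {d : ℕ} {f : F[X]} (h : f.natDegree < d) : pl f ∈ Ad F d :=
  Submodule.subset_span ⟨f, h, rfl⟩

theorem Ad_mono {m n : ℕ} (h : m ≤ n) : Ad F m ≤ Ad F n := by
  rw [Ad, Submodule.span_le]
  rintro _ ⟨f, hf, rfl⟩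
  exact Ad_mem (by omega)

theorem Ad_Ln {d : ℕ} {a b c e : UA (RatFunc F)} (ha : a ∈ Ad F d) (hb : b ∈ Ad F d)
    (hc : c ∈ Ad F d) (he : e ∈ Ad F d) : W4 _ a b c e ∈ Ln F d := by
  refine W4_span_mem ?_ ha hb hc he
  rintro _ ⟨a, ha, rfl⟩ _ ⟨b, hb, rfl⟩ _ ⟨c, hc, rfl⟩ _ ⟨e, he, rfl⟩
  exact Ln_mem ha hb hc he

theorem exists_Ad (a : UA (RatFunc F)) : ∃ n, a ∈ Ad F n := by
  have h : a ∈ Submodule.span ℚ (Set.range (pl : F[X] → _)) := by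
    rw [pl_span]; exact Submodule.mem_top
  induction h using Submodule.span_induction with
  | mem x hx =>
    obtain ⟨f, rfl⟩ := hx
    exact ⟨f.natDegree + 1, Ad_mem (by omega)⟩
  | zero => exact ⟨0, zero_mem _⟩
  | add x y _ _ hx hy =>
    obtain ⟨m, hm⟩ := hx
    obtain ⟨n, hn⟩ := hy
    exact ⟨max m n, add_mem (Ad_mono (le_max_left _ _) hm) (Ad_mono (le_max_right _ _) hn)⟩
  | smul r x _ hx =>
    obtain ⟨m, hm⟩ := hx
    exact ⟨m, Submodule.smul_mem _ _ hm⟩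

theorem exists_Ln (b : Ex 4 (UA (RatFunc F))) : ∃ n, b ∈ Ln F n := by
  have h : b ∈ Submodule.span ℚ {x | ∃ a b c d : UA (RatFunc F), x = W4 _ a b c d} := by
    rw [W4_span]; exact Submodule.mem_top
  induction h using Submodule.span_induction with
  | mem x hx =>
    obtain ⟨a, b, c, d, rfl⟩ := hx
    obtain ⟨n1, h1⟩ := exists_Ad a
    obtain ⟨n2, h2⟩ := exists_Ad b
    obtain ⟨n3, h3⟩ := exists_Ad c
    obtain ⟨n4, h4⟩ := exists_Ad d
    exact ⟨n1 + n2 + n3 + n4, Ad_Ln (Ad_mono (by omega) h1) (Ad_mono (by omega) h2)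
      (Ad_mono (by omega) h3) (Ad_mono (by omega) h4)⟩
  | zero => exact ⟨0, zero_mem _⟩
  | add x y _ _ hx hy =>
    obtain ⟨m, hm⟩ := hx
    obtain ⟨n, hn⟩ := hy
    exact ⟨max m n, add_mem (Ln_mono (le_max_left _ _) hm) (Ln_mono (le_max_right _ _) hn)⟩
  | smul r x _ hx =>
    obtain ⟨m, hm⟩ := hx
    exact ⟨m, Submodule.smul_mem _ _ hm⟩

/-- splitting off the leading coefficient -/
theorem exists_monic {f : F[X]} (hf : f ≠ 0) : ∃ (c : F) (f1 : F[X]), f1.Monic ∧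
    f1.natDegree = f.natDegree ∧ pl f = pl (C c) + pl f1 := by
  have hl : f.leadingCoeff ≠ 0 := leadingCoeff_ne_zero.2 hf
  have hm := monic_mul_leadingCoeff_inv hf
  refine ⟨f.leadingCoeff, f * C f.leadingCoeff⁻¹, hm, ?_, ?_⟩
  · exact natDegree_mul_C (inv_ne_zero hl)
  · rw [← pl_mul (C_ne_zero.2 hl) hm.ne_zero]
    congr 1
    rw [mul_comm f, ← mul_assoc, ← C_mul, mul_inv_cancel₀ hl, C_1, one_mul]

theorem sub_deg {f g : F[X]} {d : ℕ} (hd : 0 < d) (hf : f.Monic) (hg : g.Monic)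
    (hfd : f.natDegree = d) (hgd : g.natDegree = d) : (g - f).natDegree < d := by
  by_cases h : g - f = 0
  · rw [h, natDegree_zero]; exact hd
  have := degree_sub_lt_left (p := g) (q := f)
    (by rw [degree_eq_natDegree hf.ne_zero, degree_eq_natDegree hg.ne_zero, hfd, hgd])
    hg.ne_zero (by rw [hf.leadingCoeff, hg.leadingCoeff])
  rw [← hgd]
  exact natDegree_lt_natDegree h this

namespace Ctx

variable (C' : Ctx F)

theorem Qstep {d : ℕ} (hd : 0 < d) {v w : F[X]} (hv : v.natDegree ≤ d) (hw : w.natDegree ≤ d)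
    (h : ∀ a b : F[X], a.natDegree < d → b.natDegree ≤ d →
      W4 _ (pl a) (pl b) (pl v) (pl w) ∈ Mn F d ⊔ C'.T)
    {f g : F[X]} (hf : f.natDegree ≤ d) (hg : g.natDegree ≤ d) :
    W4 _ (pl f) (pl g) (pl v) (pl w) ∈ Mn F d ⊔ C'.T := by
  have h' : ∀ a b : F[X], a.natDegree ≤ d → b.natDegree < d →
      W4 _ (pl a) (pl b) (pl v) (pl w) ∈ Mn F d ⊔ C'.T := by
    intro a b ha hb
    rw [W4_s12]
    exact neg_mem (h b a hb ha)
  rcases hf.lt_or_eq with hf | hf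
  · exact h f g hf hg
  rcases hg.lt_or_eq with hg | hg
  · exact h' f g hf.le hg
  obtain ⟨c, f1, hf1, hf1d, ef⟩ := exists_monic (f := f) (by rintro rfl; simp at hf; omega)
  obtain ⟨c', g1, hg1, hg1d, eg⟩ := exists_monic (f := g) (by rintro rfl; simp at hg; omega)
  rw [hf] at hf1d
  rw [hg] at hg1d
  rw [ef, W4_add1]
  refine add_mem (h _ _ (by rw [natDegree_C]; exact hd) hg.le) ?_
  rw [eg, W4_add2]
  refine add_mem (h' _ _ hf1d.le (by rw [natDegree_C]; exact hd)) ?_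
  by_cases hr : g1 - f1 = 0
  · rw [sub_eq_zero.1 hr, W4_12]; exact zero_mem _
  have hrd := sub_deg hd hf1 hg1 hf1d hg1d
  have hA := C'.lemA1 (d + 1) (Mn F d) (fun m hm => Mn_mono (by omega))
    (algebraMap F[X] (RatFunc F) f1 / algebraMap F[X] (RatFunc F) g1) (v := v) (w := w)
    (by omega) (by omega)
  have ex : 1 - algebraMap F[X] (RatFunc F) f1 / algebraMap F[X] (RatFunc F) g1 =
      algebraMap F[X] (RatFunc F) (g1 - f1) / algebraMap F[X] (RatFunc F) g1 := by
    have := am_ne hg1.ne_zero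
    rw [map_sub]; field_simp
  rw [ex, mq_div (am_ne hf1.ne_zero) (am_ne hg1.ne_zero),
    mq_div (am_ne hr) (am_ne hg1.ne_zero)] at hA
  change W4 _ (pl f1 - pl g1) (pl (g1 - f1) - pl g1) _ _ ∈ _ at hA
  rw [W4_sub1, W4_sub2, W4_sub2, W4_12, sub_zero] at hA
  have e : W4 _ (pl f1) (pl g1) (pl v) (pl w) =
      W4 _ (pl f1) (pl (g1 - f1)) (pl v) (pl w) - W4 _ (pl g1) (pl (g1 - f1)) (pl v) (pl w) -
      (W4 _ (pl f1) (pl (g1 - f1)) (pl v) (pl w) - W4 _ (pl f1) (pl g1) (pl v) (pl w) -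
        W4 _ (pl g1) (pl (g1 - f1)) (pl v) (pl w)) := by abel
  rw [e]
  exact sub_mem (sub_mem (h' _ _ hf1d.le hrd) (h' _ _ hg1d.le hrd)) hA

theorem step1 {d : ℕ} (hd : 0 < d) : Ln F (d + 1) ≤ Mn F d ⊔ C'.T := by
  have s3 : ∀ a b c e : F[X], a.natDegree < d → b.natDegree < d → c.natDegree < d →
      e.natDegree ≤ d → W4 _ (pl a) (pl b) (pl c) (pl e) ∈ Mn F d ⊔ C'.T := by
    intro a b c e ha hb hc he
    rw [W4_s34, W4_s23, W4_s12]
    simp only [neg_neg]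
    exact neg_mem (Submodule.mem_sup_left (Mn_mem he ha hb hc))
  have s2 : ∀ a b c e : F[X], a.natDegree < d → b.natDegree < d → c.natDegree ≤ d →
      e.natDegree ≤ d → W4 _ (pl a) (pl b) (pl c) (pl e) ∈ Mn F d ⊔ C'.T := by
    intro a b c e ha hb hc he
    have := C'.Qstep hd ha.le hb.le (by
      intro a' b' ha' hb'
      rw [W4_s23, W4_s34, neg_neg]
      exact s3 _ _ _ _ ha' ha hb hb') hc he
    rw [W4_s23, W4_s12, W4_s34, W4_s23]
    simpa only [neg_neg] using this
  have s1 : ∀ a b c e : F[X], a.natDegree < d → b.natDegree ≤ d → c.natDegree ≤ d →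
      e.natDegree ≤ d → W4 _ (pl a) (pl b) (pl c) (pl e) ∈ Mn F d ⊔ C'.T := by
    intro a b c e ha hb hc he
    have := C'.Qstep hd ha.le he (by
      intro a' b' ha' hb'
      rw [W4_s23]
      exact neg_mem (s2 _ _ _ _ ha' ha hb' he)) hb hc
    rw [W4_s12, W4_s23, neg_neg]
    exact this
  rw [Ln, Submodule.span_le]
  rintro _ ⟨a, b, c, e, ha, hb, hc, he, rfl⟩
  exact C'.Qstep hd (by omega) (by omega)
    (fun a' b' ha' hb' => s1 _ _ _ _ ha' hb' (by omega) (by omega)) (by omega) (by omega)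

end Ctx

/-- symbols containing `q` and classes of degree `< deg q` -/
noncomputable def Qq (q : MonicIrr F) : Submodule ℚ (Ex 4 (UA (RatFunc F))) :=
  Submodule.span ℚ {x | ∃ u v w : F[X], u.natDegree < q.1.natDegree ∧
    v.natDegree < q.1.natDegree ∧ w.natDegree < q.1.natDegree ∧
    x = W4 _ (pl q.1) (pl u) (pl v) (pl w)}

theorem Qq_mem (q : MonicIrr F) {u v w : F[X]} (hu : u.natDegree < q.1.natDegree)
    (hv : v.natDegree < q.1.natDegree) (hw : w.natDegree < q.1.natDegree) :
    W4 _ (pl q.1) (pl u) (pl v) (pl w) ∈ Qq q :=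
  Submodule.subset_span ⟨u, v, w, hu, hv, hw, rfl⟩

theorem Mn_le {d : ℕ} (hd : 0 < d) :
    Mn F d ≤ Ln F d ⊔ ⨆ q : {q : MonicIrr F // q.1.natDegree = d}, Qq q.1 := by
  rw [Mn, Submodule.span_le]
  rintro _ ⟨f, u, v, w, hf, hu, hv, hw, rfl⟩
  rcases hf.lt_or_eq with hf | hf
  · exact Submodule.mem_sup_left (Ln_mem hf hu hv hw)
  obtain ⟨c, f1, hf1, hf1d, ef⟩ := exists_monic (f := f) (by rintro rfl; simp at hf; omega)
  rw [SetLike.mem_coe, ef, W4_add1]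
  refine add_mem (Submodule.mem_sup_left (Ln_mem (by rw [natDegree_C]; exact hd) hu hv hw)) ?_
  by_cases hi : Irreducible f1
  · refine Submodule.mem_sup_right ?_
    have hq : f1.natDegree = d := by omega
    refine (le_iSup (fun q : {q : MonicIrr F // q.1.natDegree = d} => Qq q.1)
      ⟨⟨f1, hf1, hi⟩, hq⟩) ?_
    exact Qq_mem (⟨f1, hf1, hi⟩ : MonicIrr F) (hu.trans_eq hq.symm) (hv.trans_eq hq.symm)
      (hw.trans_eq hq.symm)
  · refine Submodule.mem_sup_left ?_
    rw [hf1.irreducible_iff_natDegree] at hi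
    push Not at hi
    obtain ⟨g, h, hg, hh, rfl, hg0, hh0⟩ := hi (by rintro rfl; simp at hf1d; omega)
    rw [hg.natDegree_mul hh] at hf1d
    rw [pl_mul hg.ne_zero hh.ne_zero, W4_add1]
    exact add_mem (Ln_mem (by omega) hu hv hw) (Ln_mem (by omega) hu hv hw)

namespace Ctx

variable (C' : Ctx F)

/-- elements negligible after multiplication by `q` -/
noncomputable def Rq (q : MonicIrr F) : Submodule ℚ (UA (RatFunc F)) where
  carrier := {κ | ∀ v ∈ Ad F q.1.natDegree, ∀ w ∈ Ad F q.1.natDegree,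
    W4 _ (pl q.1) κ v w ∈ Ln F q.1.natDegree ⊔ C'.T}
  zero_mem' := by
    intro v _ w _
    rw [W4_z2]; exact zero_mem _
  add_mem' := by
    intro a b ha hb v hv w hw
    rw [W4_add2]; exact add_mem (ha v hv w hw) (hb v hv w hw)
  smul_mem' := by
    intro r a ha v hv w hw
    rw [map_smul]; exact Submodule.smul_mem _ _ (ha v hv w hw)

theorem Rq_add (q : MonicIrr F) {f g h : F[X]} (hf0 : f ≠ 0) (hg0 : g ≠ 0) (hh0 : h ≠ 0)
    (hf : f.natDegree < q.1.natDegree)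
    (hg : g.natDegree < q.1.natDegree) (hh : h.natDegree < q.1.natDegree)
    (hd : q.1 ∣ f * g - h) : pl f + pl g - pl h ∈ C'.Rq q := by
  obtain ⟨c, hc⟩ := hd
  by_cases hc0 : c = 0
  · rw [hc0, mul_zero, sub_eq_zero] at hc
    rw [← hc, pl_mul hf0 hg0, sub_self]; exact zero_mem _
  have hcd : c.natDegree < q.1.natDegree := by
    have h1 := congrArg natDegree hc
    rw [natDegree_mul (q_ne q) hc0] at h1
    have h2 := natDegree_sub_le (f * g) h
    rw [natDegree_mul hf0 hg0] at h2
    omega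
  intro v hv w hw
  refine W4_span_mem (S1 := {pl q.1}) (S2 := {pl f + pl g - pl h}) ?_
    (Submodule.mem_span_singleton_self _) (Submodule.mem_span_singleton_self _) hv hw
  rintro _ rfl _ rfl _ ⟨v, hv, rfl⟩ _ ⟨w, hw, rfl⟩
  have hA := C'.lemA1 q.1.natDegree (Ln F q.1.natDegree) (fun m hm => Mn_le_Ln hm)
    (algebraMap F[X] (RatFunc F) h / algebraMap F[X] (RatFunc F) (f * g)) hv hw
  have hfg : f * g ≠ 0 := mul_ne_zero hf0 hg0
  have ex : 1 - algebraMap F[X] (RatFunc F) h / algebraMap F[X] (RatFunc F) (f * g) =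
      algebraMap F[X] (RatFunc F) (q.1 * c) / algebraMap F[X] (RatFunc F) (f * g) := by
    have := am_ne hfg
    rw [← hc, map_sub]; field_simp
  rw [ex, mq_div (am_ne hh0) (am_ne hfg),
    mq_div (am_ne (mul_ne_zero (q_ne q) hc0)) (am_ne hfg)] at hA
  change W4 _ (pl h - pl (f * g)) (pl (q.1 * c) - pl (f * g)) _ _ ∈ _ at hA
  rw [pl_mul hf0 hg0, pl_mul (q_ne q) hc0, add_sub_assoc, W4_add2, W4_s12] at hA
  have hB : W4 _ (pl h - (pl f + pl g)) (pl c - (pl f + pl g)) (pl v) (pl w) ∈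
      Ln F q.1.natDegree ⊔ C'.T :=
    Submodule.mem_sup_left (Ad_Ln (sub_mem (Ad_mem hh) (add_mem (Ad_mem hf) (Ad_mem hg)))
      (sub_mem (Ad_mem hcd) (add_mem (Ad_mem hf) (Ad_mem hg))) (Ad_mem hv) (Ad_mem hw))
  have hD := sub_mem hA hB
  rw [add_sub_cancel_right] at hD
  have e : pl f + pl g - pl h = 0 - (pl h - (pl f + pl g)) := by abel
  rw [e, W4_sub2, W4_z2, zero_sub]
  exact hD

theorem exists_sigma (q : MonicIrr F) : ∃ σ : UA (ResField q) →ₗ[ℚ] UA (RatFunc F),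
    (∀ x, σ x ∈ Ad F q.1.natDegree) ∧ ∀ f : F[X], f ≠ 0 → f.natDegree < q.1.natDegree →
      pl f - σ (mq (rmk q f)) ∈ C'.Rq q := by
  choose lf hlf hlf' using exists_lift q
  have hl0 : ∀ x, x ≠ 0 → lf x ≠ 0 := by
    intro x hx h0
    apply hx
    rw [← hlf' x, h0, map_zero]
  let A := Ad F q.1.natDegree
  let R' : Submodule ℚ A := (C'.Rq q).comap A.subtype
  let g : ResField q → A ⧸ R' := fun x => R'.mkQ ⟨pl (lf x), Ad_mem (hlf x)⟩
  obtain ⟨l, hl⟩ := exists_ext g (by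
    intro x y hx hy
    change R'.mkQ _ = R'.mkQ _ + R'.mkQ _
    rw [← map_add, eq_comm, ← sub_eq_zero, ← map_sub, Submodule.mkQ_apply,
      Submodule.Quotient.mk_eq_zero]
    refine C'.Rq_add q (hl0 x hx) (hl0 y hy) (hl0 _ (mul_ne_zero hx hy)) (hlf _) (hlf _) (hlf _) ?_
    rw [← rmk_eq_zero, map_sub, map_mul, hlf', hlf', hlf', sub_self])
  obtain ⟨s, hs⟩ := Module.projective_lifting_property R'.mkQ l (Submodule.mkQ_surjective R')
  refine ⟨A.subtype ∘ₗ s, fun x => (s x).2, ?_⟩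
  intro f hf0 hf
  have hx : rmk q f ≠ 0 := by
    rw [Ne, rmk_eq_zero]; exact not_dvd_of_lt q hf0 hf
  have ef : lf (rmk q f) = f := by
    by_contra hne
    have h1 := hlf (rmk q f)
    have h2 := natDegree_sub_le (lf (rmk q f)) f
    refine not_dvd_of_lt q (sub_ne_zero.2 hne) (by omega) ?_
    rw [← rmk_eq_zero, map_sub, hlf', sub_self]
  have h1 : R'.mkQ (s (mq (rmk q f))) = R'.mkQ ⟨pl (lf (rmk q f)), Ad_mem (hlf _)⟩ := by
    rw [← LinearMap.comp_apply, hs, hl _ hx]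
  rw [eq_comm, ← sub_eq_zero, ← map_sub, Submodule.mkQ_apply,
      Submodule.Quotient.mk_eq_zero] at h1
  have h2 : pl (lf (rmk q f)) - (A.subtype ∘ₗ s) (mq (rmk q f)) ∈ C'.Rq q := h1
  rwa [ef] at h2

theorem Qq_D4 (q : MonicIrr F) {x} (hx : x ∈ Qq q) (h : C'.D4 q x = 0) :
    x ∈ Ln F q.1.natDegree ⊔ C'.T := by
  obtain ⟨σ, hσ1, hσ2⟩ := C'.exists_sigma q
  obtain ⟨s, hs⟩ := exists_s (pl q.1) σ
  have key : Qq q ≤ (Ln F q.1.natDegree ⊔ C'.T).comap (LinearMap.id - s ∘ₗ C'.D4 q) := by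
    rw [Qq, Submodule.span_le]
    rintro _ ⟨u, v, w, hu, hv, hw, rfl⟩
    rw [SetLike.mem_coe, Submodule.mem_comap]
    by_cases hu0 : u = 0
    · rw [hu0, pl_zero, W4_z2, map_zero]; exact zero_mem _
    by_cases hv0 : v = 0
    · rw [hv0, pl_zero, W4_z3, map_zero]; exact zero_mem _
    by_cases hw0 : w = 0
    · rw [hw0, pl_zero, W4_z4, map_zero]; exact zero_mem _
    have e := C'.D4_q q (C'.U_poly q hu0 (not_dvd_of_lt q hu0 hu))
      (C'.U_poly q hv0 (not_dvd_of_lt q hv0 hv)) (C'.U_poly q hw0 (not_dvd_of_lt q hw0 hw))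
    rw [C'.res_poly, C'.res_poly, C'.res_poly] at e
    change C'.D4 q (W4 _ (pl q.1) (pl u) (pl v) (pl w)) = _ at e
    rw [LinearMap.sub_apply, LinearMap.id_apply, LinearMap.comp_apply, e, hs]
    have hu' := hσ2 u hu0 hu _ (Ad_mem hv) _ (Ad_mem hw)
    have hv' := hσ2 v hv0 hv _ (hσ1 (mq (rmk q u))) _ (Ad_mem hw)
    have hw' := hσ2 w hw0 hw _ (hσ1 (mq (rmk q u))) _ (hσ1 (mq (rmk q v)))
    generalize σ (mq (rmk q u)) = a at *
    generalize σ (mq (rmk q v)) = b at *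
    generalize σ (mq (rmk q w)) = c at *
    rw [W4_sub2] at hu' hv' hw'
    have e3 : W4 _ (pl q.1) (pl u) (pl v) (pl w) - W4 _ (pl q.1) a b c =
        (W4 _ (pl q.1) (pl u) (pl v) (pl w) - W4 _ (pl q.1) a (pl v) (pl w)) +
        (W4 _ (pl q.1) a (pl v) (pl w) - W4 _ (pl q.1) a b (pl w)) +
        (W4 _ (pl q.1) a b (pl w) - W4 _ (pl q.1) a b c) := by abel
    rw [e3]
    refine add_mem (add_mem hu' ?_) ?_
    · rw [W4_s23, W4_s23 _ a b, ← neg_sub_neg, neg_neg, neg_neg, ← neg_sub]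
      exact neg_mem hv'
    · rw [W4_s34, W4_s23, W4_s34 _ a b c, W4_s23 _ a c b, neg_neg, neg_neg]
      exact hw'
  have := key hx
  rwa [Submodule.mem_comap, LinearMap.sub_apply, LinearMap.id_apply, LinearMap.comp_apply, h,
    map_zero, sub_zero] at this

theorem D4_other (q q' : MonicIrr F) (hd : q.1.natDegree ≤ q'.1.natDegree) (hne : q' ≠ q)
    {x} (hx : x ∈ Qq q) : C'.D4 q' x = 0 := by
  have : Qq q ≤ LinearMap.ker (C'.D4 q') := by
    rw [Qq, Submodule.span_le]
    rintro _ ⟨u, v, w, hu, hv, hw, rfl⟩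
    rw [SetLike.mem_coe, LinearMap.mem_ker]
    by_cases hu0 : u = 0
    · rw [hu0, pl_zero, W4_z2, map_zero]
    by_cases hv0 : v = 0
    · rw [hv0, pl_zero, W4_z3, map_zero]
    by_cases hw0 : w = 0
    · rw [hw0, pl_zero, W4_z4, map_zero]
    exact C'.D4_unit q' (C'.U_poly q' (q_ne q) (not_dvd_of_ne q q' hne))
      (C'.U_poly q' hu0 (not_dvd_of_lt q' hu0 (by omega)))
      (C'.U_poly q' hv0 (not_dvd_of_lt q' hv0 (by omega)))
      (C'.U_poly q' hw0 (not_dvd_of_lt q' hw0 (by omega)))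
  exact this hx

theorem D4_Ln (q : MonicIrr F) {x} (hx : x ∈ Ln F q.1.natDegree) : C'.D4 q x = 0 := by
  have : Ln F q.1.natDegree ≤ LinearMap.ker (C'.D4 q) := by
    rw [Ln, Submodule.span_le]
    rintro _ ⟨f, u, v, w, hf, hu, hv, hw, rfl⟩
    rw [SetLike.mem_coe, LinearMap.mem_ker]
    by_cases hf0 : f = 0
    · rw [hf0, pl_zero, W4_z1, map_zero]
    by_cases hu0 : u = 0
    · rw [hu0, pl_zero, W4_z2, map_zero]
    by_cases hv0 : v = 0
    · rw [hv0, pl_zero, W4_z3, map_zero]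
    by_cases hw0 : w = 0
    · rw [hw0, pl_zero, W4_z4, map_zero]
    exact C'.D4_unit q (C'.U_poly q hf0 (not_dvd_of_lt q hf0 hf))
      (C'.U_poly q hu0 (not_dvd_of_lt q hu0 hu))
      (C'.U_poly q hv0 (not_dvd_of_lt q hv0 hv))
      (C'.U_poly q hw0 (not_dvd_of_lt q hw0 hw))
  exact this hx

theorem step2 {d : ℕ} (hd : 0 < d) {b} (hb : b ∈ Mn F d) (h : ∀ q, C'.D4 q b = 0) :
    b ∈ Ln F d ⊔ C'.T := by
  obtain ⟨l, hl, m, hm, rfl⟩ := Submodule.mem_sup.1 (Mn_le hd hb)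
  refine add_mem (Submodule.mem_sup_left hl) ?_
  rw [Submodule.mem_iSup_iff_exists_finsupp] at hm
  obtain ⟨f, hf, rfl⟩ := hm
  refine Submodule.sum_mem _ ?_
  rintro ⟨q, hq⟩ hqs
  have h1 : C'.D4 q (f ⟨q, hq⟩) = 0 := by
    have h2 := h q
    subst hq
    rw [map_add, C'.D4_Ln q hl, zero_add, Finsupp.sum, map_sum,
      Finset.sum_eq_single ⟨q, rfl⟩] at h2
    · exact h2
    · rintro ⟨q', hq'⟩ _ hne
      refine C'.D4_other q' q hq'.le ?_ (hf ⟨q', hq'⟩)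
      rintro rfl
      exact hne rfl
    · intro hn; exact absurd hqs hn
  have := C'.Qq_D4 q (hf ⟨q, hq⟩) h1
  rwa [hq] at this

variable (F) in
/-- constants -/
noncomputable def Cst : Submodule ℚ (Ex 4 (UA (RatFunc F))) :=
  LinearMap.range (pM 4 (uM (algebraMap F (RatFunc F))))

theorem L1_le : Ln F 1 ≤ Cst F := by
  rw [Ln, Submodule.span_le]
  rintro _ ⟨a, b, c, d, ha, hb, hc, hd, rfl⟩
  have e : ∀ f : F[X], f.natDegree < 1 →
      pl f = uM (algebraMap F (RatFunc F)) (mq (f.coeff 0)) := by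
    intro f hf
    rw [uM_mq, RatFunc.algebraMap_eq_C, ← RatFunc.algebraMap_C,
      ← eq_C_of_natDegree_le_zero (by omega)]
    rfl
  rw [e a ha, e b hb, e c hc, e d hd, ← powMap_W4]
  exact ⟨_, rfl⟩

theorem main_ind (n : ℕ) : ∀ b ∈ Ln F (n + 1), (∀ q, C'.D4 q b = 0) → b ∈ Cst F ⊔ C'.T := by
  induction n with
  | zero =>
    intro b hb _
    exact Submodule.mem_sup_left (L1_le hb)
  | succ n ih =>
    intro b hb h
    obtain ⟨m, hm, t, ht, rfl⟩ := Submodule.mem_sup.1 (C'.step1 (Nat.succ_pos n) hb)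
    refine add_mem ?_ (Submodule.mem_sup_right ht)
    have hm' : ∀ q, C'.D4 q m = 0 := by
      intro q
      have := h q
      rwa [map_add, C'.D4_T q ht, add_zero] at this
    obtain ⟨l, hl, t', ht', rfl⟩ := Submodule.mem_sup.1 (C'.step2 (Nat.succ_pos n) hm hm')
    refine add_mem ?_ (Submodule.mem_sup_right ht')
    refine ih l hl ?_
    intro q
    have := hm' q
    rwa [map_add, C'.D4_T q ht', add_zero] at this

theorem main_thm (b : Ex 4 (UA (RatFunc F))) (h : ∀ q, C'.D4 q b = 0) : b ∈ Cst F ⊔ C'.T := by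
  obtain ⟨n, hn⟩ := exists_Ln b
  exact C'.main_ind n b (Ln_mono (by omega) hn) h

end Ctx

end Induction

section Final

theorem gen_zero {K : Type u} [Field K] : B2.gen (0 : K) = 0 := by
  rw [B2.gen, Submodule.Quotient.mk_eq_zero]
  exact Submodule.subset_span (Or.inl (Or.inl rfl))

theorem gen_one {K : Type u} [Field K] : B2.gen (1 : K) = 0 := by
  rw [B2.gen, Submodule.Quotient.mk_eq_zero]
  exact Submodule.subset_span (Or.inl (Or.inr (Or.inl rfl)))

theorem wedgeF2_z1 {K : Type u} [Field K] (y : K) : wedgeF 2 ![0, y] = 0 := by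
  apply (eE K 2).injective
  rw [eE2, mq_zero, map_zero, map_zero, LinearMap.zero_apply]

theorem wedgeF2_z2 {K : Type u} [Field K] (x : K) : wedgeF 2 ![x, 0] = 0 := by
  apply (eE K 2).injective
  rw [eE2, mq_zero, map_zero, map_zero]

variable {F : Type u} [Field F]

/-- the context attached to the data of the theorem -/
noncomputable def mkCtx
    (ν : ∀ q : MonicIrr F, RatFunc F → ℤ) (hν : ∀ q, IsNuP q (ν q))
    (res : ∀ q : MonicIrr F, RatFunc F → ResField q) (hres : ∀ q, IsResP q (ν q) (res q))
    (D4 : ∀ q : MonicIrr F,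
      ⋀[ℚ]^4 (UnitsQ (RatFunc F)) →ₗ[ℚ] ⋀[ℚ]^3 (UnitsQ (ResField q)))
    (hD4 : ∀ q, IsTame (ν q) (res q) 3 (D4 q))
    (D2 : ∀ q : MonicIrr F, ⋀[ℚ]^2 (UnitsQ (RatFunc F)) →ₗ[ℚ] UnitsQ (ResField q))
    (hD2 : ∀ q, IsTame2U (ν q) (res q) (D2 q)) : Ctx F where
  ν := ν
  hν := hν
  res := res
  hres := hres
  D4 q := (eE (ResField q) 3).toLinearMap ∘ₗ D4 q ∘ₗ (eE (RatFunc F) 4).symm.toLinearMap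
  hD4 := by
    intro q π u v w hπ h1 hu hv hw
    have h := hD4 q π ![u, v, w] hπ h1 (by
      intro i; fin_cases i
      · exact hu
      · exact hv
      · exact hw)
    have e1 : (fun i => res q (![u, v, w] i)) = ![res q u, res q v, res q w] := by
      ext i; fin_cases i <;> rfl
    rw [e1] at h
    rw [← eE4, ← eE3, ← h]
    simp only [LinearMap.comp_apply, LinearEquiv.coe_coe, LinearEquiv.symm_apply_apply]
    rfl
  D2 q := (eU (ResField q)).toLinearMap ∘ₗ D2 q ∘ₗ (eE (RatFunc F) 2).symm.toLinearMap
  hD2 := by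
    intro q π u hπ h1 hu0 hu
    rw [← eE2, ← eU_mkQ, ← hD2 q π u hπ h1 hu0 hu]
    simp only [LinearMap.comp_apply, LinearEquiv.coe_coe, LinearEquiv.symm_apply_apply]

variable (F) in
/-- from triples to `B₂ ⊗ Λ²` -/
noncomputable def phi : Z F →ₗ[ℚ] B2 (RatFunc F) ⊗[ℚ] (⋀[ℚ]^2 (UnitsQ (RatFunc F))) :=
  Finsupp.linearCombination ℚ (fun t => B2.gen t.1 ⊗ₜ[ℚ]
    wedgeF 2 ![algebraMap F[X] (RatFunc F) t.2.1, algebraMap F[X] (RatFunc F) t.2.2])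

theorem phi_single (t : RatFunc F × F[X] × F[X]) :
    phi F (Finsupp.single t 1) = B2.gen t.1 ⊗ₜ[ℚ]
      wedgeF 2 ![algebraMap F[X] (RatFunc F) t.2.1, algebraMap F[X] (RatFunc F) t.2.2] := by
  rw [phi, Finsupp.linearCombination_single, one_smul]

theorem d4_phi (d4 : B2 (RatFunc F) ⊗[ℚ] (⋀[ℚ]^2 (UnitsQ (RatFunc F))) →ₗ[ℚ]
      ⋀[ℚ]^4 (UnitsQ (RatFunc F))) (hd4 : IsDelta4 (RatFunc F) d4) (z : Z F) :
    eE (RatFunc F) 4 (d4 (phi F z)) = dl F z := by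
  have : (eE (RatFunc F) 4).toLinearMap ∘ₗ d4 ∘ₗ phi F = dl F := by
    apply Finsupp.lhom_ext'
    intro t
    apply LinearMap.ext_ring
    simp only [LinearMap.comp_apply, Finsupp.lsingle_apply, LinearEquiv.coe_coe]
    obtain ⟨x, f, g⟩ := t
    rw [phi_single, dl_single]
    simp only []
    by_cases hx0 : x = 0
    · rw [hx0, gen_zero, TensorProduct.zero_tmul, map_zero, map_zero, mq_zero, W4_z1]
    by_cases hx1 : x = 1
    · rw [hx1, gen_one, TensorProduct.zero_tmul, map_zero, map_zero, sub_self, mq_zero, W4_z2]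
    by_cases hf : f = 0
    · rw [hf, pl_zero, map_zero, wedgeF2_z1, TensorProduct.tmul_zero, map_zero, map_zero, W4_z3]
    by_cases hg : g = 0
    · rw [hg, pl_zero, map_zero, wedgeF2_z2, TensorProduct.tmul_zero, map_zero, map_zero, W4_z4]
    rw [hd4 x _ _ hx0 hx1 (am_ne hf) (am_ne hg), eE4]
    rfl
  exact LinearMap.congr_fun this z

/-- from the free residue to `B₂ ⊗ K^×` -/
noncomputable def psi (q : MonicIrr F) :
    (ResField q →₀ UA (ResField q)) →ₗ[ℚ] B2 (ResField q) ⊗[ℚ] UnitsQ (ResField q) :=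
  Finsupp.lsum ℚ (fun x => TensorProduct.mk ℚ _ _ (B2.gen x) ∘ₗ (eU (ResField q)).symm.toLinearMap)

theorem psi_single (q : MonicIrr F) (x : ResField q) (y) :
    psi q (Finsupp.single x y) = B2.gen x ⊗ₜ[ℚ] (eU (ResField q)).symm y := by
  rw [psi, Finsupp.lsum_single]
  rfl

theorem DB_phi
    (ν : ∀ q : MonicIrr F, RatFunc F → ℤ) (hν : ∀ q, IsNuP q (ν q))
    (res : ∀ q : MonicIrr F, RatFunc F → ResField q) (hres : ∀ q, IsResP q (ν q) (res q))
    (D4 : ∀ q : MonicIrr F,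
      ⋀[ℚ]^4 (UnitsQ (RatFunc F)) →ₗ[ℚ] ⋀[ℚ]^3 (UnitsQ (ResField q)))
    (hD4 : ∀ q, IsTame (ν q) (res q) 3 (D4 q))
    (D2 : ∀ q : MonicIrr F, ⋀[ℚ]^2 (UnitsQ (RatFunc F)) →ₗ[ℚ] UnitsQ (ResField q))
    (hD2 : ∀ q, IsTame2U (ν q) (res q) (D2 q))
    (DB : ∀ q : MonicIrr F,
      B2 (RatFunc F) ⊗[ℚ] (⋀[ℚ]^2 (UnitsQ (RatFunc F))) →ₗ[ℚ]
        B2 (ResField q) ⊗[ℚ] UnitsQ (ResField q))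
    (hDB : ∀ q, IsTameB2 (ν q) (res q) (D2 q) (DB q)) (q : MonicIrr F) (z : Z F) :
    DB q (phi F z) = psi q ((mkCtx ν hν res hres D4 hD4 D2 hD2).dt q z) := by
  have : DB q ∘ₗ phi F = psi q ∘ₗ (mkCtx ν hν res hres D4 hD4 D2 hD2).dt q := by
    apply Finsupp.lhom_ext'
    intro t
    apply LinearMap.ext_ring
    simp only [LinearMap.comp_apply, Finsupp.lsingle_apply]
    obtain ⟨x, f, g⟩ := t
    rw [phi_single, Ctx.dt_single, Ctx.dt0]
    simp only []
    by_cases hx0 : x = 0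
    · have hI : (mkCtx ν hν res hres D4 hD4 D2 hD2).I q x := Or.inl hx0
      rw [if_pos hI, map_neg, psi_single, hx0, Ctx.res_zero, gen_zero, gen_zero,
        TensorProduct.zero_tmul, TensorProduct.zero_tmul, map_zero, neg_zero]
    by_cases hx : ν q x = 0
    · have hI : (mkCtx ν hν res hres D4 hD4 D2 hD2).I q x := Or.inr hx
      rw [if_pos hI, map_neg, psi_single, (hDB q).2 x _ hx0 hx]
      congr 2
      rw [pl, pl, ← eE2]
      change _ = (eU _).symm ((eU _) (D2 q ((eE _ 2).symm (eE _ 2 _))))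
      rw [LinearEquiv.symm_apply_apply, LinearEquiv.symm_apply_apply]
    · have hI : ¬ (mkCtx ν hν res hres D4 hD4 D2 hD2).I q x := by
        rintro (h | h)
        · exact hx0 h
        · exact hx h
      have hx1 : x ≠ 1 := by
        rintro rfl
        exact hx (nu_one (hν q).1)
      rw [if_neg hI, map_zero, (hDB q).1 x _ hx0 hx1 hx]
  exact LinearMap.congr_fun this z

end Final

end S8

/-- two lifts of the same element differ by an element coming from `Λ⁴ F^×`
plus `δ₄` of an element whose tame symbols all lie in the span of the `{x}₂ ⊗ x`. -/
theorem statement_8 (k F : Type u) [Field k] [IsAlgClosed k] [CharZero k] [Field F]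
    [Algebra k F] (hF : IsFields1 k F) (p : MonicIrr F)
    (ν : ∀ q : MonicIrr F, RatFunc F → ℤ) (hν : ∀ q, IsNuP q (ν q))
    (res : ∀ q : MonicIrr F, RatFunc F → ResField q) (hres : ∀ q, IsResP q (ν q) (res q))
    (D4 : ∀ q : MonicIrr F,
      ⋀[ℚ]^4 (UnitsQ (RatFunc F)) →ₗ[ℚ] ⋀[ℚ]^3 (UnitsQ (ResField q)))
    (hD4 : ∀ q, IsTame (ν q) (res q) 3 (D4 q))
    (D2 : ∀ q : MonicIrr F, ⋀[ℚ]^2 (UnitsQ (RatFunc F)) →ₗ[ℚ] UnitsQ (ResField q))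
    (hD2 : ∀ q, IsTame2U (ν q) (res q) (D2 q))
    (DB : ∀ q : MonicIrr F,
      B2 (RatFunc F) ⊗[ℚ] (⋀[ℚ]^2 (UnitsQ (RatFunc F))) →ₗ[ℚ]
        B2 (ResField q) ⊗[ℚ] UnitsQ (ResField q))
    (hDB : ∀ q, IsTameB2 (ν q) (res q) (D2 q) (DB q))
    (d4 : B2 (RatFunc F) ⊗[ℚ] (⋀[ℚ]^2 (UnitsQ (RatFunc F))) →ₗ[ℚ]
      ⋀[ℚ]^4 (UnitsQ (RatFunc F)))
    (hd4 : IsDelta4 (RatFunc F) d4)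
    (a : ⋀[ℚ]^3 (UnitsQ (ResField p))) (b₁ b₂ : ⋀[ℚ]^4 (UnitsQ (RatFunc F)))
    (hb₁ : D4 p b₁ = a ∧ ∀ q : MonicIrr F, q ≠ p → D4 q b₁ = 0)
    (hb₂ : D4 p b₂ = a ∧ ∀ q : MonicIrr F, q ≠ p → D4 q b₂ = 0) :
    ∃ (a₁ : ⋀[ℚ]^4 (UnitsQ (RatFunc F)))
      (a₂ : B2 (RatFunc F) ⊗[ℚ] (⋀[ℚ]^2 (UnitsQ (RatFunc F)))),
      a₁ ∈ LinearMap.range (powMap 4 (unitsQMap (algebraMap F (RatFunc F)))) ∧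
      b₁ - b₂ = a₁ + d4 a₂ ∧
      ∀ q : MonicIrr F, DB q a₂ ∈ Submodule.span ℚ
        {y | ∃ x : ResField q, x ≠ 0 ∧ x ≠ 1 ∧ y = B2.gen x ⊗ₜ mkQ x} := by
  let C := S8.mkCtx ν hν res hres D4 hD4 D2 hD2
  have hz : ∀ q, D4 q (b₁ - b₂) = 0 := by
    intro q
    rw [map_sub]
    by_cases h : q = p
    · subst h
      rw [hb₁.1, hb₂.1, sub_self]
    · rw [hb₁.2 q h, hb₂.2 q h, sub_self]
  have hC : ∀ q, C.D4 q (S8.eE (RatFunc F) 4 (b₁ - b₂)) = 0 := by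
    intro q
    change S8.eE (ResField q) 3 (D4 q ((S8.eE (RatFunc F) 4).symm
      (S8.eE (RatFunc F) 4 (b₁ - b₂)))) = 0
    rw [LinearEquiv.symm_apply_apply, hz q, map_zero]
  obtain ⟨c, ⟨c', rfl⟩, t, ⟨z, hz', rfl⟩, hs⟩ := Submodule.mem_sup.1 (C.main_thm _ hC)
  obtain ⟨c0, rfl⟩ := (S8.eE F 4).surjective c'
  refine ⟨powMap 4 (unitsQMap (algebraMap F (RatFunc F))) c0, S8.phi F z, ⟨c0, rfl⟩, ?_, ?_⟩
  · apply (S8.eE (RatFunc F) 4).injective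
    rw [map_add, S8.d4_phi d4 hd4, ← hs, S8.eE_pM]
  · intro q
    rw [S8.DB_phi ν hν res hres D4 hD4 D2 hD2 DB hDB]
    simp only [SetLike.mem_coe, Submodule.mem_iInf, LinearMap.mem_ker] at hz'
    have := hz' q
    rw [this, map_zero]
    exact zero_mem _
end

section
/- Let π_1, π_2 be a regular system of parameters of R, let n, m, a_3, b_3, a_4, b_4 ∈ ℤ and ξ_1, ξ_3, ξ_4 ∈ R^×, and set b := {π_1^n π_2^m ξ_1}_2 ⊗ (π_1^{a_3} π_2^{b_3} ξ_3) ∧ (π_1^{a_4} π_2^{b_4} ξ_4) ∈ B_2(L)⊗Λ^2 L^×. Then ∂_{ν̄_p}(∂_{ν_p}(b)) = 0 in B_2(k) for all but finitely many height-one primes p of R with R/p regular, and the sum Σ_p ∂_{ν̄_p}(∂_{ν_p}(b)), taken over all height-one primes p of R with R/p regular, equals 0 in B_2(k). -/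
open scoped TensorProduct
open ExteriorAlgebra

open scoped TensorProduct

universe u


namespace St9

section Val
variable {F K : Type u} [Field F] [Field K]

lemma val_one {ν : F → ℤ} (h : IsDVal ν) : ν 1 = 0 := by
  have := h.map_mul 1 1 one_ne_zero one_ne_zero
  rw [one_mul] at this; omega

lemma val_inv {ν : F → ℤ} (h : IsDVal ν) {x : F} (hx : x ≠ 0) : ν x⁻¹ = - ν x := by
  have := h.map_mul x x⁻¹ hx (inv_ne_zero hx)
  rw [mul_inv_cancel₀ hx, val_one h] at this; omega

lemma val_pow {ν : F → ℤ} (h : IsDVal ν) {x : F} (hx : x ≠ 0) (n : ℕ) :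
    ν (x ^ n) = n * ν x := by
  induction n with
  | zero => simp [val_one h]
  | succ n ih =>
    rw [pow_succ, h.map_mul _ _ (pow_ne_zero _ hx) hx, ih]; push_cast; ring

lemma val_zpow {ν : F → ℤ} (h : IsDVal ν) {x : F} (hx : x ≠ 0) (n : ℤ) :
    ν (x ^ n) = n * ν x := by
  cases n with
  | ofNat n => simpa using val_pow h hx n
  | negSucc n =>
    rw [zpow_negSucc, val_inv h (pow_ne_zero _ hx), val_pow h hx, Int.negSucc_eq]
    push_cast; ring

lemma res_ne_zero {ν : F → ℤ} {res : F → K} (hr : IsResidue ν res) {x : F} (hx : x ≠ 0)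
    (h0 : ν x = 0) : res x ≠ 0 := by
  intro h
  rcases (hr.zero_iff x (Or.inr h0.ge)).1 h with h | h
  · exact hx h
  · omega

lemma res_inv {ν : F → ℤ} (h : IsDVal ν) {res : F → K} (hr : IsResidue ν res) {x : F} (hx : x ≠ 0)
    (h0 : ν x = 0) : res x⁻¹ = (res x)⁻¹ := by
  have h1 := hr.map_mul x x⁻¹ (Or.inr h0.ge) (Or.inr (by rw [val_inv h hx]; omega))
  rw [mul_inv_cancel₀ hx, hr.map_one] at h1
  exact (inv_eq_of_mul_eq_one_right h1.symm).symm

lemma res_pow {ν : F → ℤ} (h : IsDVal ν) {res : F → K} (hr : IsResidue ν res) {x : F} (hx : x ≠ 0)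
    (h0 : ν x = 0) (n : ℕ) : res (x ^ n) = res x ^ n := by
  induction n with
  | zero => simp [hr.map_one]
  | succ n ih =>
    rw [pow_succ, hr.map_mul _ _ (Or.inr (by rw [val_pow h hx, h0]; simp)) (Or.inr h0.ge), ih,
      pow_succ]

lemma res_zpow {ν : F → ℤ} (h : IsDVal ν) {res : F → K} (hr : IsResidue ν res) {x : F} (hx : x ≠ 0)
    (h0 : ν x = 0) (n : ℤ) : res (x ^ n) = res x ^ n := by
  cases n with
  | ofNat n => simpa using res_pow h hr hx h0 n
  | negSucc n =>
    rw [zpow_negSucc, zpow_negSucc, res_inv h hr (pow_ne_zero _ hx)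
      (by rw [val_pow h hx, h0]; simp), res_pow h hr hx h0]

lemma mkQ_mul {x y : F} (hx : x ≠ 0) (hy : y ≠ 0) : mkQ (x * y) = mkQ x + mkQ y := by
  unfold mkQ
  rw [dif_neg hx, dif_neg hy, dif_neg (mul_ne_zero hx hy), ← TensorProduct.tmul_add]
  congr 1
  rw [← ofMul_mul]
  congr 1
  ext; simp

lemma mkQ_zpow {x : F} (hx : x ≠ 0) (n : ℤ) : mkQ (x ^ n) = (n : ℚ) • mkQ x := by
  unfold mkQ
  rw [dif_neg hx, dif_neg (zpow_ne_zero _ hx)]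
  have : Additive.ofMul (Units.mk0 (x ^ n) (zpow_ne_zero n hx)) =
      n • Additive.ofMul (Units.mk0 x hx) := by
    rw [← ofMul_zpow]
    congr 1
    ext; simp
  rw [this, Int.cast_smul_eq_zsmul]
  exact map_zsmul (TensorProduct.mk ℤ ℚ (Additive Fˣ) 1) n _

lemma wedgeF_eq (x y : F) :
    wedgeF 2 ![x, y] = exteriorPower.ιMulti ℚ 2 ![mkQ x, mkQ y] := by
  apply Subtype.ext
  simp only [wedgeF, exteriorPower.ιMulti_apply_coe]
  congr 1
  funext i; fin_cases i <;> rfl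

lemma alt_expand {M N : Type u} [AddCommGroup M] [Module ℚ M] [AddCommGroup N] [Module ℚ N]
    (A : M [⋀^Fin 2]→ₗ[ℚ] N) (P U V : M) (a b : ℚ) :
    A ![a • P + U, b • P + V] = a • A ![P, V] - b • A ![P, U] + A ![U, V] := by
  have u0 : ∀ x w z : M, Function.update ![x, z] 0 w = ![w, z] := by
    intro x w z; funext i; fin_cases i <;> rfl
  have u1 : ∀ x w z : M, Function.update ![z, x] 1 w = ![z, w] := by
    intro x w z; funext i; fin_cases i <;> rfl
  have add0 : ∀ x y z : M, A ![x + y, z] = A ![x, z] + A ![y, z] := by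
    intro x y z
    have := A.map_update_add ![x, z] 0 x y
    simpa only [u0] using this
  have add1 : ∀ x y z : M, A ![z, x + y] = A ![z, x] + A ![z, y] := by
    intro x y z
    have := A.map_update_add ![z, x] 1 x y
    simpa only [u1] using this
  have sm0 : ∀ (c : ℚ) (x z : M), A ![c • x, z] = c • A ![x, z] := by
    intro c x z
    have := A.map_update_smul ![x, z] 0 c x
    simpa only [u0] using this
  have sm1 : ∀ (c : ℚ) (x z : M), A ![z, c • x] = c • A ![z, x] := by
    intro c x z
    have := A.map_update_smul ![z, x] 1 c x
    simpa only [u1] using this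
  have self : ∀ x : M, A ![x, x] = 0 := fun x =>
    A.map_eq_zero_of_eq ![x, x] (i := 0) (j := 1) rfl (by decide)
  have sw : A ![U, P] = - A ![P, U] := by
    have := self (P + U)
    rw [add0, add1, add1, self, self] at this
    rw [zero_add, add_zero] at this
    exact eq_neg_of_add_eq_zero_right this
  rw [add0, add1, add1, sm0, sm0, sm1, sm1, self, sw]
  module

lemma tame_eq {ν : F → ℤ} (h : IsDVal ν) {res : F → K}
    {D : ⋀[ℚ]^2 (UnitsQ F) →ₗ[ℚ] UnitsQ K} (hD : IsTame2U ν res D)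
    {π u v : F} (hπ : π ≠ 0) (hπ1 : ν π = 1) (hu : u ≠ 0) (hu0 : ν u = 0) (hv : v ≠ 0)
    (hv0 : ν v = 0) (a b : ℤ) :
    D (wedgeF 2 ![π ^ a * u, π ^ b * v]) = (a : ℚ) • mkQ (res v) - (b : ℚ) • mkQ (res u) := by
  have key : ∀ x y : F, (D.compAlternatingMap (exteriorPower.ιMulti ℚ 2)) ![mkQ x, mkQ y]
      = D (wedgeF 2 ![x, y]) := by
    intro x y; rw [wedgeF_eq]; rfl
  have huv : D (wedgeF 2 ![u, v]) = 0 := by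
    have h1 := hD (π * u) v (mul_ne_zero hπ hu) (by rw [h.map_mul _ _ hπ hu, hπ1, hu0]; rfl) hv hv0
    have h2 := hD π v hπ hπ1 hv hv0
    have h3 := alt_expand (D.compAlternatingMap (exteriorPower.ιMulti ℚ 2)) (mkQ π) (mkQ u) (mkQ v)
      1 0
    rw [one_smul, ← mkQ_mul hπ hu, zero_smul, zero_add, key, key, key, key, h1, h2,
      one_smul, zero_smul, sub_zero] at h3
    exact left_eq_add.1 h3
  rw [← key, mkQ_mul (zpow_ne_zero _ hπ) hu, mkQ_mul (zpow_ne_zero _ hπ) hv, mkQ_zpow hπ,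
    mkQ_zpow hπ, alt_expand, key, key, key, huv, hD π v hπ hπ1 hv hv0, hD π u hπ hπ1 hu hu0,
    add_zero]

lemma local_zero {ν : F → ℤ} (h : IsDVal ν) {res : F → K}
    {D2 : ⋀[ℚ]^2 (UnitsQ F) →ₗ[ℚ] UnitsQ K} (hD2 : IsTame2U ν res D2)
    {DB : B2 F ⊗[ℚ] (⋀[ℚ]^2 (UnitsQ F)) →ₗ[ℚ] B2 K ⊗[ℚ] UnitsQ K}
    (hDB : IsTameB2 ν res D2 DB) {w u v : F} (hw : w ≠ 0) (hw0 : ν w = 0)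
    (hu : u ≠ 0) (hu0 : ν u = 0) (hv : v ≠ 0) (hv0 : ν v = 0) :
    DB (B2.gen w ⊗ₜ wedgeF 2 ![u, v]) = 0 := by
  obtain ⟨π, hπ, hπ1⟩ := h.surj 1
  have := tame_eq h hD2 hπ hπ1 hu hu0 hv hv0 0 0
  simp only [zpow_zero, one_mul, Int.cast_zero, zero_smul, sub_zero] at this
  rw [hDB.2 w _ hw hw0, this, TensorProduct.tmul_zero, neg_zero]

lemma local_val {k : Type u} [Field k] {ν : F → ℤ} (h : IsDVal ν) {res : F → K}
    (hr : IsResidue ν res)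
    {D2 : ⋀[ℚ]^2 (UnitsQ F) →ₗ[ℚ] UnitsQ K} (hD2 : IsTame2U ν res D2)
    {DB : B2 F ⊗[ℚ] (⋀[ℚ]^2 (UnitsQ F)) →ₗ[ℚ] B2 K ⊗[ℚ] UnitsQ K}
    (hDB : IsTameB2 ν res D2 DB)
    {νb : K → ℤ} (hb : IsDVal νb) {resb : K → k}
    {DB' : B2 K ⊗[ℚ] UnitsQ K →ₗ[ℚ] B2 k} (hDB' : IsTameB1 νb resb DB')
    {π σ x1 x3 x4 : F} (hπ : π ≠ 0) (hσ : σ ≠ 0) (h1 : x1 ≠ 0) (h3 : x3 ≠ 0) (h4 : x4 ≠ 0)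
    (vπ : ν π = 1) (vσ : ν σ = 0) (v1 : ν x1 = 0) (v3 : ν x3 = 0) (v4 : ν x4 = 0)
    (wσ : νb (res σ) = 1) (w1 : νb (res x1) = 0) (w3 : νb (res x3) = 0) (w4 : νb (res x4) = 0)
    (n m a₃ b₃ a₄ b₄ : ℤ) :
    DB' (DB (B2.gen (π ^ n * σ ^ m * x1) ⊗ₜ
      wedgeF 2 ![π ^ a₃ * σ ^ b₃ * x3, π ^ a₄ * σ ^ b₄ * x4])) =
    if n = 0 ∧ m = 0 then ((a₃ : ℚ) * b₄ - a₄ * b₃) • B2.gen (resb (res x1)) else 0 := by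
  have vσz : ∀ j : ℤ, ν (σ ^ j) = 0 := fun j => by rw [val_zpow h hσ, vσ, mul_zero]
  have hσz : ∀ j : ℤ, σ ^ j ≠ 0 := fun j => zpow_ne_zero j hσ
  have va : ν (π ^ n * σ ^ m * x1) = n := by
    rw [h.map_mul _ _ (mul_ne_zero (zpow_ne_zero _ hπ) (hσz m)) h1,
      h.map_mul _ _ (zpow_ne_zero _ hπ) (hσz m), val_zpow h hπ, vπ, vσz, v1]; ring
  have ha : π ^ n * σ ^ m * x1 ≠ 0 := mul_ne_zero (mul_ne_zero (zpow_ne_zero _ hπ) (hσz m)) h1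
  by_cases hn : n = 0
  swap
  · rw [if_neg (fun hh => hn hh.1), hDB.1 _ _ ha _ (by rw [va]; exact hn), map_zero]
    intro hh
    rw [hh, val_one h] at va
    exact hn va.symm
  subst hn
  rw [hDB.2 _ _ ha va]
  have vu : ∀ (j : ℤ) (x : F), x ≠ 0 → ν x = 0 → ν (σ ^ j * x) = 0 := by
    intro j x hx vx
    rw [h.map_mul _ _ (hσz j) hx, vσz, vx, add_zero]
  have ru : ∀ (j : ℤ) (x : F), x ≠ 0 → ν x = 0 → res (σ ^ j * x) = res σ ^ j * res x := by
    intro j x hx vx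
    rw [hr.map_mul _ _ (Or.inr (vσz j).ge) (Or.inr vx.ge), res_zpow h hr hσ vσ]
  have hrσ : res σ ≠ 0 := res_ne_zero hr hσ vσ
  have wu : ∀ (j : ℤ) (x : F), x ≠ 0 → ν x = 0 → νb (res x) = 0 → νb (res (σ ^ j * x)) = j := by
    intro j x hx vx wx
    rw [ru j x hx vx, hb.map_mul _ _ (zpow_ne_zero _ hrσ) (res_ne_zero hr hx vx), val_zpow hb hrσ,
      wσ, wx]; ring
  have nu : ∀ (j : ℤ) (x : F), x ≠ 0 → ν x = 0 → res (σ ^ j * x) ≠ 0 := fun j x hx vx =>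
    res_ne_zero hr (mul_ne_zero (hσz j) hx) (vu j x hx vx)
  rw [mul_assoc (π ^ a₃), mul_assoc (π ^ a₄), tame_eq h hD2 hπ vπ (mul_ne_zero (hσz _) h3)
    (vu _ _ h3 v3) (mul_ne_zero (hσz _) h4) (vu _ _ h4 v4), zpow_zero, one_mul,
    TensorProduct.tmul_sub, TensorProduct.tmul_smul, TensorProduct.tmul_smul, map_neg, map_sub,
    map_smul, map_smul]
  by_cases hm : m = 0
  · subst hm
    rw [zpow_zero, one_mul, if_pos ⟨rfl, rfl⟩, hDB'.2 _ _ (res_ne_zero hr h1 v1) w1 (nu _ _ h4 v4),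
      hDB'.2 _ _ (res_ne_zero hr h1 v1) w1 (nu _ _ h3 v3), wu _ _ h4 v4 w4, wu _ _ h3 v3 w3]
    module
  · have hw := wu m x1 h1 v1 w1
    have hne1 : res (σ ^ m * x1) ≠ 1 := by
      intro hh
      rw [hh, val_one hb] at hw
      exact hm hw.symm
    have hne : νb (res (σ ^ m * x1)) ≠ 0 := by rw [hw]; exact hm
    rw [if_neg (fun hh => hm hh.2), hDB'.1 _ _ (nu _ _ h1 v1) hne1 hne (nu _ _ h4 v4),
      hDB'.1 _ _ (nu _ _ h1 v1) hne1 hne (nu _ _ h3 v3)]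
    simp

end Val

lemma val_gen_eq_one {A K : Type u} [CommRing A] [IsDomain A] [IsNoetherianRing A] [Field K]
    [Algebra A K] [IsFractionRing A K] {ν : K → ℤ} (h : IsDVal ν) {t : A} (ht : t ≠ 0)
    (htu : ¬ IsUnit t) (h0 : 0 ≤ ν (algebraMap A K t))
    (hν : ∀ x : A, x ≠ 0 → ¬ t ∣ x → ν (algebraMap A K x) = 0) : ν (algebraMap A K t) = 1 := by
  have inj : ∀ x : A, x ≠ 0 → algebraMap A K x ≠ 0 := fun x hx => by
    simpa using hx
  have key : ∀ x : A, x ≠ 0 → ∃ j : ℤ, ν (algebraMap A K x) = j * ν (algebraMap A K t) := by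
    intro x hx
    obtain ⟨c, hc, hd⟩ := (FiniteMultiplicity.of_not_isUnit htu hx).exists_eq_pow_mul_and_not_dvd
    have hc0 : c ≠ 0 := by rintro rfl; simp at hd
    refine ⟨multiplicity t x, ?_⟩
    conv_lhs => rw [hc]
    rw [map_mul, map_pow, h.map_mul _ _ (pow_ne_zero _ (inj t ht)) (inj c hc0),
      val_pow h (inj t ht), hν c hc0 hd, add_zero]
  obtain ⟨z, hz, hz1⟩ := h.surj 1
  obtain ⟨x, y, hy, rfl⟩ := IsFractionRing.div_surjective (A := A) z
  have hy0 : y ≠ 0 := nonZeroDivisors.ne_zero hy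
  have hx0 : x ≠ 0 := by rintro rfl; simp at hz
  obtain ⟨i, hi⟩ := key x hx0
  obtain ⟨j, hj⟩ := key y hy0
  rw [div_eq_mul_inv, h.map_mul _ _ (inj x hx0) (inv_ne_zero (inj y hy0)), val_inv h (inj y hy0),
    hi, hj] at hz1
  have : ν (algebraMap A K t) * (i - j) = 1 := by linear_combination hz1
  rcases Int.eq_one_or_neg_one_of_mul_eq_one this with h | h
  · exact h
  · omega

section Ring
variable {R : Type u} [CommRing R] [IsDomain R] [IsLocalRing R] [IsNoetherianRing R]

lemma no_pow (hdim : ringKrullDim R = 2) {π σ : R}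
    (hπ : Ideal.span {π, σ} = IsLocalRing.maximalIdeal R) (N : ℕ)
    (hN : σ ^ N ∈ Ideal.span {π}) : False := by
  have hπm : π ∈ IsLocalRing.maximalIdeal R := by
    rw [← hπ]; exact Ideal.subset_span (by simp)
  have hmin : IsLocalRing.maximalIdeal R ∈ (Ideal.span {π}).minimalPrimes := by
    refine ⟨⟨inferInstance, ?_⟩, ?_⟩
    · rwa [Ideal.span_singleton_le_iff_mem]
    · rintro q ⟨hq, hle⟩ _
      have hq' : q.IsPrime := hq
      rw [← hπ, Ideal.span_le]
      intro x hx
      rcases hx with rfl | hx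
      · exact hle (Ideal.mem_span_singleton_self _)
      · rw [Set.mem_singleton_iff] at hx
        rw [hx]
        exact hq'.mem_of_pow_mem N (hle hN)
  have h1 := Ideal.height_le_one_of_isPrincipal_of_mem_minimalPrimes _ _ hmin
  have h2 := IsLocalRing.maximalIdeal_height_eq_ringKrullDim (R := R)
  rw [hdim] at h2
  have h3 : (IsLocalRing.maximalIdeal R).height = 2 := WithBot.coe_injective h2
  rw [h3] at h1
  exact absurd h1 (by decide)

lemma pi_ne_zero (hdim : ringKrullDim R = 2) {π σ : R}
    (hπ : Ideal.span {π, σ} = IsLocalRing.maximalIdeal R) : π ≠ 0 := by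
  rintro rfl
  apply no_pow hdim (π := σ) (σ := 0) (by rw [← hπ, Set.pair_comm]) 1
  simp

lemma span_prime (hdim : ringKrullDim R = 2) {π σ : R}
    (hπ : Ideal.span {π, σ} = IsLocalRing.maximalIdeal R) : (Ideal.span {π}).IsPrime := by
  have hπm : π ∈ IsLocalRing.maximalIdeal R := by
    rw [← hπ]; exact Ideal.subset_span (by simp)
  have hne : Ideal.span {π} ≠ ⊤ := by
    rw [Ne, Ideal.span_singleton_eq_top]
    exact (IsLocalRing.mem_maximalIdeal _).1 hπm
  -- every element outside `(π)` is a unit times a power of `σ` modulo `π`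
  have key : ∀ x : R, x ∉ Ideal.span {π} →
      ∃ (j : ℕ) (v : R), IsUnit v ∧ x - σ ^ j * v ∈ Ideal.span {π} := by
    intro x hx
    by_contra hcon
    push Not at hcon
    have step : ∀ j : ℕ, ∃ v : R, x - σ ^ j * v ∈ Ideal.span {π} := by
      intro j
      induction j with
      | zero => exact ⟨x, by simp⟩
      | succ j ih =>
        obtain ⟨v, hv⟩ := ih
        have hvu : ¬ IsUnit v := fun hu => hcon j v hu hv
        have hvm : v ∈ IsLocalRing.maximalIdeal R := (IsLocalRing.mem_maximalIdeal _).2 hvu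
        rw [← hπ, Ideal.mem_span_pair] at hvm
        obtain ⟨a, b, rfl⟩ := hvm
        refine ⟨b, ?_⟩
        have : x - σ ^ (j + 1) * b = (x - σ ^ j * (a * π + b * σ)) + (σ ^ j * a) * π := by ring
        rw [this]
        exact Ideal.add_mem _ hv (Ideal.mul_mem_left _ _ (Ideal.mem_span_singleton_self _))
    have : Nontrivial (R ⧸ Ideal.span {π}) := Ideal.Quotient.nontrivial_iff.2 hne
    have : IsLocalRing (R ⧸ Ideal.span {π}) :=
      IsLocalRing.of_surjective' (Ideal.Quotient.mk (Ideal.span {π})) Ideal.Quotient.mk_surjective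
    have hσ : ¬ IsUnit (Ideal.Quotient.mk (Ideal.span {π}) σ) := by
      intro hu
      have hσm : σ ∈ IsLocalRing.maximalIdeal R := by
        rw [← hπ]; exact Ideal.subset_span (by simp)
      obtain ⟨w, hw⟩ := hu.exists_right_inv
      obtain ⟨w, rfl⟩ := Ideal.Quotient.mk_surjective w
      rw [← map_mul, ← map_one (Ideal.Quotient.mk (Ideal.span {π})), Ideal.Quotient.eq] at hw
      have h1 : σ * w - 1 ∈ IsLocalRing.maximalIdeal R :=
        (Ideal.span_singleton_le_iff_mem _).2 hπm hw
      have h2 := Ideal.sub_mem _ (Ideal.mul_mem_right w _ hσm) h1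
      rw [sub_sub_cancel] at h2
      exact (Ideal.ne_top_iff_one _).1 (Ideal.IsPrime.ne_top inferInstance) h2
    have hinf := Ideal.iInf_pow_eq_bot_of_isLocalRing
      (Ideal.span {Ideal.Quotient.mk (Ideal.span {π}) σ})
      (by rwa [Ne, Ideal.span_singleton_eq_top])
    apply hx
    rw [← Ideal.Quotient.eq_zero_iff_mem, ← Ideal.mem_bot, ← hinf, Ideal.mem_iInf]
    intro j
    obtain ⟨v, hv⟩ := step j
    rw [← Ideal.Quotient.eq] at hv
    rw [hv, map_mul, map_pow, Ideal.span_singleton_pow]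
    exact Ideal.mul_mem_right _ _ (Ideal.mem_span_singleton_self _)
  refine ⟨hne, ?_⟩
  intro x y hxy
  by_contra hcon
  push Not at hcon
  obtain ⟨i, v, hv, hxv⟩ := key x hcon.1
  obtain ⟨j, w, hw, hyw⟩ := key y hcon.2
  apply no_pow hdim hπ (i + j)
  have h1 : σ ^ (i + j) * (v * w) ∈ Ideal.span {π} := by
    have : σ ^ (i + j) * (v * w) = x * y - (x - σ ^ i * v) * y - (σ ^ i * v) * (y - σ ^ j * w) := by
      ring
    rw [this]
    exact Ideal.sub_mem _ (Ideal.sub_mem _ hxy (Ideal.mul_mem_right _ _ hxv))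
      (Ideal.mul_mem_left _ _ hyw)
  exact (Ideal.mul_unit_mem_iff_mem _ (hv.mul hw)).1 h1

/-- The prime `(π)`. -/
noncomputable def thePrime (hdim : ringKrullDim R = 2) {π σ : R}
    (hπ : Ideal.span {π, σ} = IsLocalRing.maximalIdeal R) : RegPrimes R :=
  ⟨Ideal.span {π}, by
    have hp := span_prime hdim hπ
    have h0 := pi_ne_zero hdim hπ
    refine ⟨⟨hp, by simpa using h0, ?_⟩, σ, ?_⟩
    · intro q hq hlt
      have hπq : π ∉ q := fun hh => hlt.not_ge ((Ideal.span_singleton_le_iff_mem _).2 hh)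
      have hprime : Prime π := (Ideal.span_singleton_prime h0).1 hp
      rw [eq_bot_iff]
      intro x hx
      rw [Ideal.mem_bot]
      by_contra hx0
      obtain ⟨c, hc, hd⟩ :=
        (FiniteMultiplicity.of_not_isUnit hprime.not_isUnit hx0).exists_eq_pow_mul_and_not_dvd
      rw [hc] at hx
      rcases hq.mem_or_mem hx with h | h
      · exact hπq (hq.mem_of_pow_mem _ h)
      · exact hd (Ideal.mem_span_singleton.1 (hlt.le h))
    · rw [← hπ, Ideal.map_span, Set.image_pair]
      have : Ideal.Quotient.mk (Ideal.span {π}) π = 0 :=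
        Ideal.Quotient.eq_zero_iff_mem.2 (Ideal.mem_span_singleton_self _)
      rw [this]
      simp [Ideal.span_insert]⟩

lemma eq_thePrime (hdim : ringKrullDim R = 2) {π σ : R}
    (hπ : Ideal.span {π, σ} = IsLocalRing.maximalIdeal R) (p : RegPrimes R) (hp : π ∈ p.1) :
    p = thePrime hdim hπ := by
  apply Subtype.ext
  by_contra hne
  have hle : Ideal.span {π} ≤ p.1 := (Ideal.span_singleton_le_iff_mem _).2 hp
  have := p.2.1.2.2 _ (span_prime hdim hπ) (lt_of_le_of_ne hle (Ne.symm hne))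
  exact pi_ne_zero hdim hπ (by simpa using this)

end Ring

lemma nu_unit {R L : Type u} [CommRing R] [IsDomain R] [Field L] [Algebra R L] {p : Ideal R}
    {ν : L → ℤ}
    (h : IsNuPrime p ν) {x : R} (hx : x ∉ p) : ν (algebraMap R L x) = 0 := by
  have hx0 : x ≠ 0 := by rintro rfl; exact hx p.zero_mem
  have h1 := h.2.1 x hx0
  have h2 := h.2.2 x hx0
  by_contra hne
  exact hx (h2.2 (by omega))

lemma prime_val (k R L : Type u) [Field k]
    [CommRing R] [IsDomain R] [IsLocalRing R] [IsNoetherianRing R] [Algebra k R]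
    [Field L] [Algebra R L] [IsFractionRing R L]
    (hdim : ringKrullDim R = 2)
    (π σ : R) (hπ : Ideal.span {π, σ} = IsLocalRing.maximalIdeal R)
    (p : RegPrimes R) (hp : p = thePrime hdim hπ)
    (ν : L → ℤ) (hν : IsNuPrime p.1 ν)
    (res : L → ResFieldP p) (hres : IsResPrime p ν res)
    (νb : ResFieldP p → ℤ) (hνb : IsNuBar p νb)
    (resb : ResFieldP p → k) (hresb : IsResBar p νb resb)
    (D2 : ⋀[ℚ]^2 (UnitsQ L) →ₗ[ℚ] UnitsQ (ResFieldP p))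
    (hD2 : IsTame2U ν res D2)
    (DB : B2 L ⊗[ℚ] (⋀[ℚ]^2 (UnitsQ L)) →ₗ[ℚ] B2 (ResFieldP p) ⊗[ℚ] UnitsQ (ResFieldP p))
    (hDB : IsTameB2 ν res D2 DB)
    (DB' : B2 (ResFieldP p) ⊗[ℚ] UnitsQ (ResFieldP p) →ₗ[ℚ] B2 k)
    (hDB' : IsTameB1 νb resb DB')
    (n m a₃ b₃ a₄ b₄ : ℤ) (ξ₁ ξ₃ ξ₄ : Rˣ) (c : k)
    (hc : (ξ₁ : R) - algebraMap k R c ∈ IsLocalRing.maximalIdeal R) :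
    DB' (DB (B2.gen ((algebraMap R L π) ^ n * (algebraMap R L σ) ^ m *
        algebraMap R L (ξ₁ : R)) ⊗ₜ
      wedgeF 2 ![(algebraMap R L π) ^ a₃ * (algebraMap R L σ) ^ b₃ *
          algebraMap R L (ξ₃ : R),
        (algebraMap R L π) ^ a₄ * (algebraMap R L σ) ^ b₄ *
          algebraMap R L (ξ₄ : R)])) =
    if n = 0 ∧ m = 0 then ((a₃ : ℚ) * b₄ - a₄ * b₃) • B2.gen c else 0 := by
  have hpI : p.1 = Ideal.span {π} := by rw [hp]; rfl
  have hpp : p.1.IsPrime := p.2.1.1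
  have hπ0 : π ≠ 0 := pi_ne_zero hdim hπ
  have hσ0 : σ ≠ 0 := pi_ne_zero hdim (π := σ) (σ := π) (by rw [← hπ, Set.pair_comm])
  have hπm : π ∈ IsLocalRing.maximalIdeal R := by
    rw [← hπ]; exact Ideal.subset_span (by simp)
  have hσm : σ ∈ IsLocalRing.maximalIdeal R := by
    rw [← hπ]; exact Ideal.subset_span (by simp)
  have hσp : σ ∉ p.1 := fun hh => no_pow hdim hπ 1 (by rw [pow_one, ← hpI]; exact hh)
  have inj : ∀ x : R, x ≠ 0 → algebraMap R L x ≠ 0 := fun x hx => by simpa using hx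
  have hξp : ∀ ξ : Rˣ, (ξ : R) ∉ p.1 := fun ξ hh =>
    hpp.ne_top (Ideal.eq_top_of_isUnit_mem _ hh ξ.isUnit)
  have hvπ : ν (algebraMap R L π) = 1 := by
    refine val_gen_eq_one hν.1 hπ0 ((IsLocalRing.mem_maximalIdeal _).1 hπm) (hν.2.1 π hπ0) ?_
    intro x _ hd
    apply nu_unit hν
    rwa [hpI, Ideal.mem_span_singleton]
  -- the bar side
  letI : Algebra (R ⧸ p.1) (ResFieldP p) :=
    inferInstanceAs (Algebra (R ⧸ p.1) (FractionRing (R ⧸ p.1)))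
  haveI : IsFractionRing (R ⧸ p.1) (ResFieldP p) :=
    inferInstanceAs (IsFractionRing (R ⧸ p.1) (FractionRing (R ⧸ p.1)))
  have hr : ∀ x : R, res (algebraMap R L x) =
    algebraMap (R ⧸ p.1) (ResFieldP p) (Ideal.Quotient.mk p.1 x) := hres.2
  have hb1 : ∀ x : R ⧸ p.1, x ≠ 0 → 0 ≤ νb (algebraMap (R ⧸ p.1) (ResFieldP p) x) := hνb.2.1
  have hb2 : ∀ x : R, Ideal.Quotient.mk p.1 x ≠ 0 → (x ∈ IsLocalRing.maximalIdeal R ↔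
      0 < νb (algebraMap (R ⧸ p.1) (ResFieldP p) (Ideal.Quotient.mk p.1 x))) := hνb.2.2
  have hcb : ∀ c : k, resb (algebraMap (R ⧸ p.1) (ResFieldP p)
      (Ideal.Quotient.mk p.1 (algebraMap k R c))) = c := hresb.2
  have mk0 : ∀ x : R, x ∉ p.1 → Ideal.Quotient.mk p.1 x ≠ 0 := fun x hx hh =>
    hx (Ideal.Quotient.eq_zero_iff_mem.1 hh)
  have wz : ∀ x : R, x ∉ p.1 → x ∉ IsLocalRing.maximalIdeal R →
      νb (algebraMap (R ⧸ p.1) (ResFieldP p) (Ideal.Quotient.mk p.1 x)) = 0 := by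
    intro x hx hxm
    have h1 := hb1 _ (mk0 x hx)
    have h2 := hb2 x (mk0 x hx)
    by_contra hne
    exact hxm (h2.2 (by omega))
  have wξ : ∀ ξ : Rˣ, νb (res (algebraMap R L (ξ : R))) = 0 := by
    intro ξ
    rw [hr]
    exact wz _ (hξp ξ) (fun hh => (IsLocalRing.mem_maximalIdeal _).1 hh ξ.isUnit)
  have hσu : ¬ IsUnit (Ideal.Quotient.mk p.1 σ) := by
    intro hu
    obtain ⟨w, hw⟩ := hu.exists_right_inv
    obtain ⟨w, rfl⟩ := Ideal.Quotient.mk_surjective w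
    rw [← map_mul, ← map_one (Ideal.Quotient.mk p.1), Ideal.Quotient.eq] at hw
    have h1 : σ * w - 1 ∈ IsLocalRing.maximalIdeal R := IsLocalRing.le_maximalIdeal hpp.ne_top hw
    have h2 := Ideal.sub_mem _ (Ideal.mul_mem_right w _ hσm) h1
    rw [sub_sub_cancel] at h2
    exact (Ideal.ne_top_iff_one _).1 (Ideal.IsPrime.ne_top inferInstance) h2
  have wσ : νb (res (algebraMap R L σ)) = 1 := by
    rw [hr]
    refine val_gen_eq_one hνb.1 (mk0 σ hσp) hσu (hb1 _ (mk0 σ hσp)) ?_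
    intro x hx hd
    obtain ⟨x, rfl⟩ := Ideal.Quotient.mk_surjective x
    refine wz x (fun hh => hx (Ideal.Quotient.eq_zero_iff_mem.2 hh)) ?_
    intro hxm
    rw [← hπ, Ideal.mem_span_pair] at hxm
    obtain ⟨a, b, rfl⟩ := hxm
    apply hd
    have : Ideal.Quotient.mk p.1 π = 0 := Ideal.Quotient.eq_zero_iff_mem.2 (by
      rw [hpI]; exact Ideal.mem_span_singleton_self _)
    rw [map_add, map_mul, map_mul, this, mul_zero, zero_add]
    exact Dvd.intro_left _ rfl
  have hcr : resb (res (algebraMap R L (ξ₁ : R))) = c := by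
    have nn : ∀ x : R, algebraMap (R ⧸ p.1) (ResFieldP p) (Ideal.Quotient.mk p.1 x) = 0 ∨
        0 ≤ νb (algebraMap (R ⧸ p.1) (ResFieldP p) (Ideal.Quotient.mk p.1 x)) := by
      intro x
      by_cases hx : Ideal.Quotient.mk p.1 x = 0
      · left; rw [hx, map_zero]
      · exact Or.inr (hb1 _ hx)
    have hz : resb (algebraMap (R ⧸ p.1) (ResFieldP p)
        (Ideal.Quotient.mk p.1 ((ξ₁ : R) - algebraMap k R c))) = 0 := by
      rw [hresb.1.zero_iff _ (nn _)]
      by_cases hx : Ideal.Quotient.mk p.1 ((ξ₁ : R) - algebraMap k R c) = 0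
      · left; rw [hx, map_zero]
      · exact Or.inr ((hb2 _ hx).1 hc)
    have := hresb.1.map_add _ _ (nn ((ξ₁ : R) - algebraMap k R c)) (nn (algebraMap k R c))
    rw [hz, hcb, zero_add, ← map_add, ← map_add, sub_add_cancel] at this
    rw [hr, this]
  have := local_val hν.1 hres.1 hD2 hDB hνb.1 hDB' (inj _ hπ0) (inj _ hσ0)
    (inj _ ξ₁.ne_zero) (inj _ ξ₃.ne_zero) (inj _ ξ₄.ne_zero) hvπ (nu_unit hν hσp)
    (nu_unit hν (hξp ξ₁)) (nu_unit hν (hξp ξ₃)) (nu_unit hν (hξp ξ₄)) wσ (wξ ξ₁) (wξ ξ₃) (wξ ξ₄)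
    n m a₃ b₃ a₄ b₄
  rw [this, hcr]

end St9

/-- Parshin reciprocity for strictly regular elements of `B₂(L) ⊗ Λ² L^×`
over a two-dimensional regular local ring. -/
theorem statement_9 (k R L : Type u) [Field k] [IsAlgClosed k] [CharZero k]
    [CommRing R] [IsDomain R] [IsLocalRing R] [IsNoetherianRing R] [Algebra k R]
    [Field L] [Algebra R L] [IsFractionRing R L]
    (hdim : ringKrullDim R = 2)
    (hresk : ∀ x : R, ∃ c : k, x - algebraMap k R c ∈ IsLocalRing.maximalIdeal R)
    (π₁ π₂ : R) (hπ : Ideal.span {π₁, π₂} = IsLocalRing.maximalIdeal R)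
    (νp : ∀ p : RegPrimes R, L → ℤ) (hνp : ∀ p, IsNuPrime p.1 (νp p))
    (resp : ∀ p : RegPrimes R, L → ResFieldP p) (hresp : ∀ p, IsResPrime p (νp p) (resp p))
    (νb : ∀ p : RegPrimes R, ResFieldP p → ℤ) (hνb : ∀ p, IsNuBar p (νb p))
    (resb : ∀ p : RegPrimes R, ResFieldP p → k) (hresb : ∀ p, IsResBar p (νb p) (resb p))
    (D2 : ∀ p : RegPrimes R, ⋀[ℚ]^2 (UnitsQ L) →ₗ[ℚ] UnitsQ (ResFieldP p))
    (hD2 : ∀ p, IsTame2U (νp p) (resp p) (D2 p))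
    (DB : ∀ p : RegPrimes R,
      B2 L ⊗[ℚ] (⋀[ℚ]^2 (UnitsQ L)) →ₗ[ℚ] B2 (ResFieldP p) ⊗[ℚ] UnitsQ (ResFieldP p))
    (hDB : ∀ p, IsTameB2 (νp p) (resp p) (D2 p) (DB p))
    (DB' : ∀ p : RegPrimes R,
      B2 (ResFieldP p) ⊗[ℚ] UnitsQ (ResFieldP p) →ₗ[ℚ] B2 k)
    (hDB' : ∀ p, IsTameB1 (νb p) (resb p) (DB' p))
    (n m a₃ b₃ a₄ b₄ : ℤ) (ξ₁ ξ₃ ξ₄ : Rˣ)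
    (b : B2 L ⊗[ℚ] (⋀[ℚ]^2 (UnitsQ L)))
    (hb : b = B2.gen ((algebraMap R L π₁) ^ n * (algebraMap R L π₂) ^ m *
        algebraMap R L (ξ₁ : R)) ⊗ₜ
      wedgeF 2 ![(algebraMap R L π₁) ^ a₃ * (algebraMap R L π₂) ^ b₃ *
          algebraMap R L (ξ₃ : R),
        (algebraMap R L π₁) ^ a₄ * (algebraMap R L π₂) ^ b₄ *
          algebraMap R L (ξ₄ : R)]) :
    {p : RegPrimes R | DB' p (DB p b) ≠ 0}.Finite ∧
    ∑ᶠ p : RegPrimes R, DB' p (DB p b) = 0 := by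
  classical
  obtain ⟨c, hc⟩ := hresk (ξ₁ : R)
  have hπ' : Ideal.span {π₂, π₁} = IsLocalRing.maximalIdeal R := by rw [← hπ, Set.pair_comm]
  set p₁ := St9.thePrime hdim hπ with hp₁
  set p₂ := St9.thePrime hdim hπ' with hp₂
  have hne : p₁ ≠ p₂ := by
    intro hh
    have h1 : Ideal.span {π₁} = Ideal.span {π₂} := congrArg Subtype.val hh
    apply St9.no_pow hdim hπ 1
    rw [pow_one, h1]
    exact Ideal.mem_span_singleton_self _
  have inj : ∀ x : R, x ≠ 0 → algebraMap R L x ≠ 0 := fun x hx => by simpa using hx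
  have hz : ∀ p : RegPrimes R, p ≠ p₁ → p ≠ p₂ → DB' p (DB p b) = 0 := by
    intro p h1 h2
    have hm1 : π₁ ∉ p.1 := fun hh => h1 (St9.eq_thePrime hdim hπ p hh)
    have hm2 : π₂ ∉ p.1 := fun hh => h2 (St9.eq_thePrime hdim hπ' p hh)
    have hpp : p.1.IsPrime := p.2.1.1
    have z1 := inj _ (St9.pi_ne_zero hdim hπ)
    have z2 := inj _ (St9.pi_ne_zero hdim hπ')
    have v1 := St9.nu_unit (hνp p) hm1
    have v2 := St9.nu_unit (hνp p) hm2
    have nz : ∀ (i j : ℤ) (ξ : Rˣ), (algebraMap R L π₁) ^ i * (algebraMap R L π₂) ^ j *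
        algebraMap R L (ξ : R) ≠ 0 := fun i j ξ =>
      mul_ne_zero (mul_ne_zero (zpow_ne_zero _ z1) (zpow_ne_zero _ z2)) (inj _ ξ.ne_zero)
    have vz : ∀ (i j : ℤ) (ξ : Rˣ), νp p ((algebraMap R L π₁) ^ i * (algebraMap R L π₂) ^ j *
        algebraMap R L (ξ : R)) = 0 := by
      intro i j ξ
      have vξ := St9.nu_unit (hνp p) (x := (ξ : R))
        (fun hh => hpp.ne_top (Ideal.eq_top_of_isUnit_mem _ hh ξ.isUnit))
      rw [(hνp p).1.map_mul _ _ (mul_ne_zero (zpow_ne_zero _ z1) (zpow_ne_zero _ z2))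
        (inj _ ξ.ne_zero), (hνp p).1.map_mul _ _ (zpow_ne_zero _ z1) (zpow_ne_zero _ z2),
        St9.val_zpow (hνp p).1 z1, St9.val_zpow (hνp p).1 z2, v1, v2, vξ]
      simp
    rw [hb, St9.local_zero (hνp p).1 (hD2 p) (hDB p) (nz _ _ _) (vz _ _ _) (nz _ _ _) (vz _ _ _)
      (nz _ _ _) (vz _ _ _), map_zero]
  have e1 : DB' p₁ (DB p₁ b) =
      if n = 0 ∧ m = 0 then ((a₃ : ℚ) * b₄ - a₄ * b₃) • B2.gen c else 0 := by
    rw [hb]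
    exact St9.prime_val k R L hdim π₁ π₂ hπ p₁ hp₁ _ (hνp _) _ (hresp _) _ (hνb _) _ (hresb _) _
      (hD2 _) _ (hDB _) _ (hDB' _) n m a₃ b₃ a₄ b₄ ξ₁ ξ₃ ξ₄ c hc
  have e2 : DB' p₂ (DB p₂ b) =
      if m = 0 ∧ n = 0 then ((b₃ : ℚ) * a₄ - b₄ * a₃) • B2.gen c else 0 := by
    rw [hb, mul_comm ((algebraMap R L π₁) ^ n), mul_comm ((algebraMap R L π₁) ^ a₃),
      mul_comm ((algebraMap R L π₁) ^ a₄)]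
    exact St9.prime_val k R L hdim π₂ π₁ hπ' p₂ hp₂ _ (hνp _) _ (hresp _) _ (hνb _) _ (hresb _) _
      (hD2 _) _ (hDB _) _ (hDB' _) m n b₃ a₃ b₄ a₄ ξ₁ ξ₃ ξ₄ c hc
  have hsub : (Function.support fun p : RegPrimes R => DB' p (DB p b)) ⊆
      (({p₁, p₂} : Finset (RegPrimes R)) : Set (RegPrimes R)) := by
    intro p hp
    by_contra hcon
    simp only [Finset.coe_insert, Finset.coe_singleton, Set.mem_insert_iff,
      Set.mem_singleton_iff, not_or] at hcon
    exact hp (hz p hcon.1 hcon.2)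
  refine ⟨(Finset.finite_toSet _).subset hsub, ?_⟩
  rw [finsum_eq_sum_of_support_subset _ hsub, Finset.sum_pair hne, e1, e2]
  by_cases hn : n = 0 <;> by_cases hm : m = 0 <;> simp only [hn, hm, and_self, and_true, and_false,
    if_true, if_false, add_zero]
  module
end
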